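/- arXiv:2506.09019 — 4 statements merged into one kernel-verified Lean document; each statement's English description precedes it below -/
import Mathlib

section
/- Let p > 3 be a prime, let k be a field of characteristic p, and let d ≥ 2. Then there exist real numbers L_R and L_S such that the sequence e ↦ dim_k( k[x_0,…,x_d]/(x_0^{p^e},…,x_d^{p^e}, x_0² + x_1² + ⋯ + x_d²) ) / p^{d·e} converges to L_R, the sequence e ↦ dim_k( k[x_0,…,x_d]/(x_0^{p^e},…,x_d^{p^e}, x_0² + ⋯ + x_{d−1}² + x_d³) ) / p^{d·e} converges to L_S, and L_S > L_R. That is, e_HK(S_{p,d}) > e_HK(R_{p,d}) for all primes p > 3 and d ≥ 2. -/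
open MvPolynomial

/-- The Hilbert–Kunz function of the hypersurface defined by `f` in `n` variables,
in characteristic `p`, at level `e`. -/
noncomputable def HKfun (k : Type*) [Field k] (n p e : ℕ)
    (f : MvPolynomial (Fin n) k) : ℕ :=
  Module.finrank k
    (MvPolynomial (Fin n) k ⧸
      Ideal.span
        (Set.range (fun i : Fin n => (X i : MvPolynomial (Fin n) k) ^ p ^ e) ∪ {f}))


/-! Certificate -/
noncomputable def gS {R : Type*} [CommRing R] (X Y : R) (a : ℕ) : R :=
  ∑ i ∈ Finset.range a, (-X) ^ i * Y ^ (a - 1 - i)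

theorem gS_mul {R : Type*} [CommRing R] (X Y : R) (a : ℕ) :
    (X + Y) * gS X Y a = Y ^ a - (-X) ^ a := by
  have := (Commute.all (-X) Y).geom_sum₂_mul a
  unfold gS
  linear_combination -this

theorem gS_ann {R : Type*} [CommRing R] (X Y : R) (a : ℕ) (c : R) (hc : (X + Y) * c = 0) :
    gS X Y a * c = a * Y ^ (a - 1) * c := by
  have h1 : ∀ i : ℕ, (-X) ^ i * c = Y ^ i * c := by
    intro i
    induction i with
    | zero => simp
    | succ i ih => linear_combination (-X) * ih - Y ^ i * hc
  unfold gS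
  rw [Finset.sum_mul]
  rw [Finset.sum_congr rfl (g := fun _ => Y ^ (a-1) * c)]
  · simp [mul_assoc]
  · intro i hi
    have hi := Finset.mem_range.1 hi
    have : Y ^ (a-1) = Y ^ i * Y ^ (a-1-i) := by rw [← pow_add]; congr 1; omega
    rw [this]
    linear_combination Y ^ (a-1-i) * h1 i

theorem gS_top {R : Type*} [CommRing R] (X Y : R) (a : ℕ) (ha : 1 ≤ a) (c : R)
    (hc : Y ^ a * c = 0) :
    Y ^ (a-1) * gS X Y a * c = Y ^ (a-1) * (-X) ^ (a - 1) * c := by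
  unfold gS
  obtain ⟨a, rfl⟩ := Nat.exists_eq_add_of_le' ha
  simp only [Nat.add_sub_cancel]
  rw [Finset.sum_range_succ, mul_add, add_mul, Finset.mul_sum, Finset.sum_mul,
    Finset.sum_eq_zero]
  · simp
  · intro i hi
    have hi := Finset.mem_range.1 hi
    have : Y ^ (a-i) = Y * Y ^ (a-i-1) := by rw [← pow_succ']; congr 1; omega
    rw [this]
    linear_combination (-X)^i * Y ^ (a-i-1) * hc

theorem gS_succ {R : Type*} [CommRing R] (X Y : R) (a : ℕ) :
    gS X Y (a+1) = Y * gS X Y a + (-X) ^ a := by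
  unfold gS
  rw [Finset.sum_range_succ, Finset.mul_sum]
  simp only [Nat.add_sub_cancel, Nat.sub_self, pow_zero, mul_one, add_left_inj]
  refine Finset.sum_congr rfl fun i hi => ?_
  have hi := Finset.mem_range.1 hi
  have : Y ^ (a-i) = Y * Y ^ (a-1-i) := by rw [← pow_succ']; congr 1; omega
  rw [this]; ring

theorem gH {R : Type*} [CommRing R] (X Y : R) (a : ℕ) :
    ∃ h : R, (X + Y) * h = -X * gS X Y a - a * Y ^ a ∧
      ∀ c : R, (X + Y) * c = 0 → 2 * h * c = -(a * (a + 1)) * Y ^ (a - 1) * c := by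
  induction a with
  | zero => exact ⟨0, by simp [gS], by simp⟩
  | succ a ih =>
    obtain ⟨h, h1, h2⟩ := ih
    refine ⟨Y * (h - gS X Y a) - (-X) ^ a, ?_, ?_⟩
    · have := gS_mul X Y a
      rw [gS_succ]
      push_cast
      linear_combination Y * h1 - Y * this
    · intro c hc
      have k1 := h2 c hc
      have k2 := gS_ann X Y a c hc
      have k3 := gS_ann X Y (a+1) c hc
      rw [gS_succ] at k3
      have e : (a : R) * (Y * Y ^ (a-1)) = a * Y ^ a := by
        rcases a with _ | a
        · simp
        · simp [pow_succ']
      simp only [Nat.add_sub_cancel] at k3 ⊢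
      push_cast at k3 ⊢
      linear_combination Y * k1 - 2 * k3 - (a + 1) * c * e

/-- A certificate for a small block. -/
def Cert {R : Type*} [CommRing R] (p n : ℕ) (F g g' m : R) : Prop :=
  F ^ n * g = 0 ∧ F * g' = 0 ∧ ∃ c : ℤ, ¬ ((p : ℤ) ∣ c) ∧ g * g' = c * m

theorem cert_two {R : Type*} [CommRing R] (p a : ℕ) (hp : p.Prime) (hpa : p = 2 * a + 1)
    (ha : 1 ≤ a) (x y : R) (hx : x ^ p = 0) (hy : y ^ p = 0) :
    ∃ g, Cert p 1 (x ^ 2 + y ^ 2) g g (x ^ (p-1) * y ^ (p-1)) := by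
  have hx' : x * (x ^ 2) ^ a = 0 := by rw [← hx, hpa]; ring
  have hy' : y * (y ^ 2) ^ a = 0 := by rw [← hy, hpa]; ring
  have hk : (x ^ 2 + y ^ 2) * (x * y * gS (x^2) (y^2) a) = 0 := by
    have := gS_mul (x^2) (y^2) a
    have e : (-(x^2)) ^ a = (-1) ^ a * (x^2) ^ a := by rw [neg_pow]
    rw [e] at this
    linear_combination x * y * this + x * hy' - (-1)^a * y * hx'
  refine ⟨x * y * gS (x^2) (y^2) a, by rw [pow_one]; exact hk, hk, (-1) ^ (a-1) * a, ?_, ?_⟩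
  · intro h
    have : (p : ℤ) ∣ a := by
      rcases neg_one_pow_eq_or ℤ (a-1) with h' | h' <;> simpa [h'] using h
    have := Nat.le_of_dvd (by omega) (Int.natCast_dvd_natCast.1 this)
    omega
  · have k1 := gS_ann (x^2) (y^2) a _ hk
    have k2 := gS_top (x^2) (y^2) a ha (y^2 * x^2) (by linear_combination y * x^2 * hy')
    have e : (-(x^2)) ^ (a-1) = (-1) ^ (a-1) * (x^2) ^ (a-1) := by rw [neg_pow]
    have ex : x ^ (p-1) = (x^2) ^ (a-1) * x^2 := by
      rw [← pow_succ, ← pow_mul]; congr 1; omega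
    have ey : y ^ (p-1) = (y^2) ^ (a-1) * y^2 := by
      rw [← pow_succ, ← pow_mul]; congr 1; omega
    rw [e] at k2
    rw [ex, ey]
    push_cast
    linear_combination x * y * k1 + a * k2

theorem cert_three {R : Type*} [CommRing R] (p a : ℕ) (hp : p.Prime) (hpa : p = 2 * a + 1)
    (ha : 2 ≤ a) (x y w : R) (hx : x ^ p = 0) (hy : y ^ p = 0) (hw : w ^ p = 0) :
    ∃ g g', Cert p (a-1) (x ^ 2 + y ^ 2 + w ^ 2) g g' (x ^ (p-1) * y ^ (p-1) * w ^ (p-1)) := by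
  obtain ⟨b, rfl⟩ := Nat.exists_eq_add_of_le' ha
  have hx' : x * (x ^ 2) ^ (b+2) = 0 := by rw [← hx, hpa]; ring
  have hy' : y * (y ^ 2) ^ (b+2) = 0 := by rw [← hy, hpa]; ring
  have hw' : w * (w ^ 2) ^ (b+2) = 0 := by rw [← hw, hpa]; ring
  obtain ⟨h, h1, h2⟩ := gH (x^2) (y^2) (b+2)
  have k2 := gS_top (x^2) (y^2) (b+2) (by omega) (y^2 * x^2) (by linear_combination y * x^2 * hy')
  have hS := gS_mul (x^2) (y^2) (b+2)
  generalize gS (x^2) (y^2) (b+2) = S at *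
  have e : (-(x^2)) ^ (b+2) = (-1) ^ (b+2) * (x^2) ^ (b+2) := by rw [neg_pow]
  have e' : (-(x^2)) ^ (b+1) = (-1) ^ (b+1) * (x^2) ^ (b+1) := by rw [neg_pow]
  rw [e] at hS
  -- y h generates a block of size two
  have A : (x^2+y^2) * (y * h) = y * (-x^2 * S) := by
    push_cast at h1
    linear_combination y * h1 - (b+2) * hy'
  have B : (x^2+y^2) * (y * (-x^2 * S)) = 0 := by
    linear_combination - y * x^2 * hS - x^2 * hy' + x * y * (-1)^(b+2) * hx'
  have C := h2 _ B
  simp only [show b + 2 - 1 = b + 1 by omega] at *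
  rw [e'] at k2
  generalize hu : y * (-x^2 * S) = u at *
  generalize hv : y * h = v at *
  have hT : ∀ n : ℕ, (x^2+y^2+w^2)^(n+1) * v = (w^2)^(n+1) * v + (n+1) * (w^2)^n * u := by
    intro n
    induction n with
    | zero => simp; linear_combination A
    | succ n ih =>
      rw [pow_succ']
      push_cast
      linear_combination (x^2+y^2+w^2) * ih + (w^2)^(n+1) * A + (n+1) * (w^2)^n * B
  have hT' : ∀ n : ℕ, (x^2+y^2+w^2)^n * u = (w^2)^n * u := by
    intro n
    induction n with
    | zero => simp
    | succ n ih =>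
      rw [pow_succ']
      linear_combination (x^2+y^2+w^2) * ih + (w^2)^n * B
  refine ⟨2 * w * (w^2 * v - (b+1) * u), w * ((w^2)^(b+1) * v - (w^2)^b * u), ?_, ?_, (-1)^(b+1) * -((b+2)*(b+2)*(b+3)), ?_, ?_⟩
  · have t1 := hT b
    have t2 := hT' (b+1)
    linear_combination 2 * w * w^2 * t1 - 2 * w * (b+1) * t2 + 2 * v * hw'
  · linear_combination w * (w^2)^(b+1) * A - w * (w^2)^b * B + v * hw'
  · have hpz : Prime (p : ℤ) := Nat.prime_iff_prime_int.1 hp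
    intro hd
    have : (p : ℤ) ∣ ((b+2)*(b+2)*(b+3) : ℕ) := by
      push_cast
      rcases neg_one_pow_eq_or ℤ (b+1) with h' | h' <;> rw [h'] at hd
      · simpa using hd
      · simpa using hd
    have := Int.natCast_dvd_natCast.1 this
    rcases (hp.dvd_mul).1 this with h | h
    · rcases (hp.dvd_mul).1 h with h | h <;>
      · have := Nat.le_of_dvd (by omega) h
        omega
    · have := Nat.le_of_dvd (by omega) h
      omega
  · have ex : x ^ (p-1) = (x^2) ^ (b+1) * x^2 := by
      rw [← pow_succ, ← pow_mul]; congr 1; omega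
    have ey : y ^ (p-1) = (y^2) ^ (b+1) * y^2 := by
      rw [← pow_succ, ← pow_mul]; congr 1; omega
    have ew : w ^ (p-1) = (w^2) ^ (b+1) * w^2 := by
      rw [← pow_succ, ← pow_mul]; congr 1; omega
    have huu : u * u = 0 := by
      linear_combination -u * A + v * B
    have hvu : 2 * v * u = (b+2) * (b+3) * (-1)^(b+1) * (x^(p-1) * y^(p-1)) := by
      rw [ex, ey]
      push_cast at C
      linear_combination -2 * u * hv + y * C - (b+2)*(b+3) * (y^2)^(b+1) * y * hu.symm + (b+2)*(b+3) * k2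
    rw [ew]
    push_cast
    linear_combination (2 * v * v * w) * hw' + 2 * (b+1) * w^2 * (w^2)^b * huu - (b+2) * (w^2)^(b+1) * w^2 * hvu

theorem cert_all {R : Type*} [CommRing R] (p a : ℕ) (hp : p.Prime) (hpa : p = 2 * a + 1)
    (ha : 2 ≤ a) (x : ℕ → R) (hx : ∀ i, x i ^ p = 0) (d : ℕ) :
    ∃ g g', Cert p (a-1) (∑ i ∈ Finset.range (d+2), x i ^ 2) g g'
      (∏ i ∈ Finset.range (d+2), x i ^ (p-1)) := by
  have up : ∀ F g m : R, Cert p 1 F g g m → Cert p (a-1) F g g m := by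
    rintro F g m ⟨h1, h2, h3⟩
    refine ⟨?_, h2, h3⟩
    rw [show a - 1 = (a-2) + 1 by omega, pow_succ, mul_assoc, h2, mul_zero]
  induction d using Nat.twoStepInduction with
  | zero =>
    obtain ⟨g, hg⟩ := cert_two p a hp hpa (by omega) (x 0) (x 1) (hx 0) (hx 1)
    exact ⟨g, g, by simpa [Finset.sum_range_succ, Finset.prod_range_succ] using up _ _ _ hg⟩
  | one =>
    obtain ⟨g, g', hg⟩ := cert_three p a hp hpa ha (x 0) (x 1) (x 2) (hx 0) (hx 1) (hx 2)
    exact ⟨g, g', by simpa [Finset.sum_range_succ, Finset.prod_range_succ] using hg⟩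
  | more d ih _ =>
    obtain ⟨g, g', h1, h2, c, hc, h3⟩ := ih
    obtain ⟨f, -, k2, c', hc', k3⟩ :=
      cert_two p a hp hpa (by omega) (x (d+2)) (x (d+3)) (hx _) (hx _)
    refine ⟨g * f, g' * f, ?_, ?_, c * c', ?_, ?_⟩
    · rw [Finset.sum_range_succ, Finset.sum_range_succ, add_assoc]
      have : ∀ n : ℕ, (∑ i ∈ Finset.range (d+2), x i ^ 2 + (x (d+2) ^ 2 + x (d+2+1) ^ 2)) ^ n * (g * f)
          = (∑ i ∈ Finset.range (d+2), x i ^ 2) ^ n * g * f := by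
        intro n
        induction n with
        | zero => simp
        | succ n ih =>
          rw [pow_succ']
          linear_combination (∑ i ∈ Finset.range (d+2), x i ^ 2 + (x (d+2) ^ 2 + x (d+2+1) ^ 2)) * ih
            + (∑ i ∈ Finset.range (d+2), x i ^ 2) ^ n * g * k2
      rw [this, h1, zero_mul]
    · rw [Finset.sum_range_succ, Finset.sum_range_succ, add_assoc]
      linear_combination f * h2 + g' * k2
    · intro h
      rcases (Nat.prime_iff_prime_int.1 hp).dvd_or_dvd h with h | h
      · exact hc h
      · exact hc' h
    · rw [Finset.prod_range_succ, Finset.prod_range_succ]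
      push_cast
      linear_combination f * f * h3 + c * (∏ i ∈ Finset.range (d+2), x i ^ (p-1)) * k3

section
variable {k V : Type*} [Field k] [AddCommGroup V] [Module k V] [FiniteDimensional k V]

theorem rank_step (T : Module.End k V) (n : ℕ) :
    Module.finrank k (LinearMap.range (T^(n+1))) +
      Module.finrank k (LinearMap.ker T ⊓ LinearMap.range (T^n) : Submodule k V) =
    Module.finrank k (LinearMap.range (T^n)) := by
  have h := LinearMap.finrank_range_add_finrank_ker (T.domRestrict (LinearMap.range (T^n)))
  rw [← h]
  congr 1
  · have : LinearMap.range (T.domRestrict (LinearMap.range (T^n))) = LinearMap.range (T^(n+1)) := by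
      rw [LinearMap.range_domRestrict, pow_succ', Module.End.mul_eq_comp, LinearMap.range_comp]
    rw [this]
  · have : (LinearMap.ker (T.domRestrict (LinearMap.range (T^n)))).map (LinearMap.range (T^n)).subtype
        = LinearMap.ker T ⊓ LinearMap.range (T^n) := by
      ext v
      simp only [Submodule.mem_map, LinearMap.mem_ker, LinearMap.domRestrict_apply,
        Submodule.subtype_apply, Submodule.mem_inf]
      constructor
      · rintro ⟨w, hw, rfl⟩
        exact ⟨hw, w.2⟩
      · rintro ⟨h1, h2⟩
        exact ⟨⟨v, h2⟩, h1, rfl⟩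
    rw [← this, Submodule.finrank_map_subtype_eq]
end
section
variable {k A : Type*} [Field k] [CommRing A] [Algebra k A] [FiniteDimensional k A]

theorem finrank_quot_pow (F : A) (n : ℕ) :
    Module.finrank k (A ⧸ Ideal.span {F^n}) +
      Module.finrank k (LinearMap.range ((LinearMap.mulLeft k F)^n)) = Module.finrank k A := by
  have : LinearMap.range ((LinearMap.mulLeft k F)^n) = (Ideal.span {F^n}).restrictScalars k := by
    ext v
    rw [LinearMap.pow_mulLeft]
    simp only [LinearMap.mem_range, LinearMap.mulLeft_apply, Submodule.restrictScalars_mem, Ideal.mem_span_singleton', mul_comm]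
  rw [this]
  exact Submodule.finrank_quotient_add_finrank ((Ideal.span {F^n}).restrictScalars k)

theorem quot_step (F : A) (n : ℕ) :
    Module.finrank k (A ⧸ Ideal.span {F^(n+1)}) = Module.finrank k (A ⧸ Ideal.span {F^n}) +
      Module.finrank k (LinearMap.ker (LinearMap.mulLeft k F) ⊓
        LinearMap.range ((LinearMap.mulLeft k F)^n) : Submodule k A) := by
  have h1 := finrank_quot_pow (k := k) F n
  have h2 := finrank_quot_pow (k := k) F (n+1)
  have h3 := rank_step (LinearMap.mulLeft k F) n
  omega

theorem range_pow_succ_le (T : Module.End k A) (n : ℕ) :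
    LinearMap.range (T^(n+1)) ≤ LinearMap.range (T^n) := by
  rw [pow_succ, Module.End.mul_eq_comp]
  exact LinearMap.range_comp_le_range _ _

theorem quot_conc (F : A) (n : ℕ) :
    Module.finrank k (A ⧸ Ideal.span {F^(n+2)}) + Module.finrank k (A ⧸ Ideal.span {F^n}) ≤
      2 * Module.finrank k (A ⧸ Ideal.span {F^(n+1)}) := by
  have h1 := quot_step (k := k) F n
  have h2 := quot_step (k := k) F (n+1)
  have h3 := Submodule.finrank_mono (inf_le_inf_left (LinearMap.ker (LinearMap.mulLeft k F))
    (range_pow_succ_le (LinearMap.mulLeft k F) n))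
  rw [show n + 1 + 1 = n + 2 from rfl] at h2
  omega

theorem quot_strict (F g g' : A) (j : ℕ) (h1 : F^j * g = 0) (h2 : F * g' = 0) (h3 : g * g' ≠ 0) :
    Module.finrank k (A ⧸ Ideal.span {F^(j+1)}) <
      (j+1) * Module.finrank k (A ⧸ Ideal.span {F^1}) := by
  have z : Module.finrank k (A ⧸ Ideal.span {F^0}) = 0 := by
    have := finrank_quot_pow (k := k) F 0
    rw [pow_zero (LinearMap.mulLeft k F), Module.End.one_eq_id, LinearMap.range_id, finrank_top] at this
    omega
  have s0 := quot_step (k := k) F 0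
  rw [pow_zero (LinearMap.mulLeft k F), Module.End.one_eq_id, LinearMap.range_id, inf_top_eq, z, zero_add, zero_add] at s0
  have le : ∀ n, Module.finrank k (A ⧸ Ideal.span {F^n}) ≤ n * Module.finrank k (A ⧸ Ideal.span {F^1}) := by
    intro n
    induction n with
    | zero => simp [z]
    | succ n ih =>
      rw [quot_step, add_mul, one_mul]
      refine add_le_add ih ?_
      rw [s0]
      exact Submodule.finrank_mono inf_le_left
  rw [quot_step, add_mul, one_mul]
  refine add_lt_add_of_le_of_lt (le j) ?_
  rw [s0]
  refine Submodule.finrank_lt_finrank_of_lt (lt_of_le_of_ne inf_le_left ?_)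
  intro h
  have hg : g' ∈ LinearMap.ker (LinearMap.mulLeft k F) := by simpa using h2
  rw [← h] at hg
  obtain ⟨v, hv⟩ := hg.2
  rw [LinearMap.pow_mulLeft, LinearMap.mulLeft_apply] at hv
  apply h3
  rw [← hv]
  linear_combination v * h1

end

section
variable {k : Type*} [Field k] {n : ℕ}

/-- The `r`-component. -/
noncomputable def comp (p : ℕ) (r : Fin n → Fin p) :
    MvPolynomial (Fin n) k →ₗ[k] MvPolynomial (Fin n) k :=
  (MvPolynomial.basisMonomials (Fin n) k).constr k fun t : Fin n →₀ ℕ =>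
    if ∀ i, t i % p = r i then
      monomial (Finsupp.equivFunOnFinite.symm fun i => t i / p) (1 : k) else 0

theorem comp_monomial (p : ℕ) (r : Fin n → Fin p) (t : Fin n →₀ ℕ) (c : k) :
    comp p r (monomial t c) = if ∀ i, t i % p = r i then
      monomial (Finsupp.equivFunOnFinite.symm fun i => t i / p) c else 0 := by
  have h : monomial t c = c • (MvPolynomial.basisMonomials (Fin n) k) t := by
    rw [coe_basisMonomials, smul_monomial, smul_eq_mul, mul_one]
  rw [h, map_smul]
  unfold comp
  rw [Module.Basis.constr_basis]
  split_ifs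
  · rw [smul_monomial, smul_eq_mul, mul_one]
  · simp

theorem comp_expand_mul (p : ℕ) (hp : 0 < p) (r : Fin n → Fin p) (P Q : MvPolynomial (Fin n) k) :
    comp p r (expand p Q * P) = Q * comp p r P := by
  induction P using MvPolynomial.induction_on' with
  | add P P' h h' => rw [mul_add, map_add, map_add, mul_add, h, h']
  | monomial t c =>
    induction Q using MvPolynomial.induction_on' with
    | add P P' h h' => rw [map_add, add_mul, map_add, add_mul, h, h']
    | monomial s b =>
      rw [expand_monomial, monomial_mul, comp_monomial, comp_monomial]
      have : (∀ i, (p • s + t) i % p = r i) ↔ ∀ i, t i % p = r i := by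
        simp
      simp only [this]
      split_ifs with h
      · rw [monomial_mul]
        congr 1
        congr 1
        ext i
        simp [Nat.mul_add_div hp]
      · simp

theorem sum_comp (p : ℕ) (hp : 0 < p) (P : MvPolynomial (Fin n) k) :
    P = ∑ r : Fin n → Fin p, monomial (Finsupp.equivFunOnFinite.symm fun i => (r i : ℕ)) 1 *
      expand p (comp p r P) := by
  induction P using MvPolynomial.induction_on' with
  | add P P' h h' =>
    conv_lhs => rw [h, h']
    rw [← Finset.sum_add_distrib]
    simp [mul_add]
  | monomial t c =>
    rw [Finset.sum_eq_single (fun i => ⟨t i % p, Nat.mod_lt _ hp⟩)]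
    · rw [comp_monomial, if_pos (by simp), expand_monomial, monomial_mul, one_mul]
      congr 1
      congr 1
      ext i
      simp [Nat.mod_add_div]
    · intro r _ hr
      rw [comp_monomial, if_neg, map_zero, mul_zero]
      intro h
      apply hr
      ext i
      simp [h]
    · simp

theorem comp_single (p : ℕ) (hp : 0 < p) (r s : Fin n → Fin p) (Q : MvPolynomial (Fin n) k) :
    comp p r (monomial (Finsupp.equivFunOnFinite.symm fun i => (s i : ℕ)) 1 * expand p Q) =
      if r = s then Q else 0 := by
  rw [mul_comm, comp_expand_mul p hp, comp_monomial]
  by_cases h : r = s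
  · subst h
    rw [if_pos (by intro i; simp [Nat.mod_eq_of_lt]), if_pos rfl]
    have : (Finsupp.equivFunOnFinite.symm fun i => (Finsupp.equivFunOnFinite.symm fun i => (r i : ℕ)) i / p)
       = (0 : Fin n →₀ ℕ) := by
      ext i; simp
    rw [this]
    simp
  · rw [if_neg h, if_neg, mul_zero]
    intro h'
    apply h
    ext i
    have := h' i
    simp [Nat.mod_eq_of_lt] at this
    omega

theorem finrank_expand (p : ℕ) (hp : 0 < p) (S : Set (MvPolynomial (Fin n) k))
    [FiniteDimensional k (MvPolynomial (Fin n) k ⧸ Ideal.span S)] :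
    Module.finrank k (MvPolynomial (Fin n) k ⧸ Ideal.span (expand p '' S)) =
      p ^ n * Module.finrank k (MvPolynomial (Fin n) k ⧸ Ideal.span S) := by
  let Ψ : MvPolynomial (Fin n) k →ₗ[k] ((Fin n → Fin p) → MvPolynomial (Fin n) k ⧸ Ideal.span S) :=
    LinearMap.pi fun r => (Ideal.Quotient.mkₐ k (Ideal.span S)).toLinearMap ∘ₗ comp p r
  have hΨ : ∀ P r, Ψ P r = Ideal.Quotient.mk (Ideal.span S) (comp p r P) := fun P r => rfl
  have hsurj : Function.Surjective Ψ := by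
    intro f
    choose g hg using fun r => Ideal.Quotient.mk_surjective (f r)
    refine ⟨∑ s : Fin n → Fin p, monomial (Finsupp.equivFunOnFinite.symm fun i => (s i : ℕ)) 1 *
      expand p (g s), ?_⟩
    ext r
    rw [hΨ, map_sum]
    simp only [comp_single p hp]
    simp [hg]
  have hker : LinearMap.ker Ψ = (Ideal.span (expand p '' S)).restrictScalars k := by
    ext P
    rw [LinearMap.mem_ker, Submodule.restrictScalars_mem]
    constructor
    · intro h
      rw [sum_comp p hp P]
      refine Ideal.sum_mem _ fun r _ => Ideal.mul_mem_left _ _ ?_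
      have : comp p r P ∈ Ideal.span S := by
        rw [← Ideal.Quotient.eq_zero_iff_mem, ← hΨ, h]; rfl
      have := Ideal.mem_map_of_mem (expand p : MvPolynomial (Fin n) k →ₐ[k] _) this
      rwa [Ideal.map_span] at this
    · intro h
      ext r
      rw [hΨ]
      change Ideal.Quotient.mk _ _ = 0
      rw [Ideal.Quotient.eq_zero_iff_mem]
      suffices H : ∀ Q, comp p r (Q * P) ∈ Ideal.span S by simpa using H 1
      refine Submodule.span_induction (p := fun P _ => ∀ Q, comp p r (Q * P) ∈ Ideal.span S)
        ?_ ?_ ?_ ?_ h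
      · rintro _ ⟨x, hx, rfl⟩ Q
        rw [mul_comm, comp_expand_mul p hp]
        exact Ideal.mul_mem_right _ _ (Ideal.subset_span hx)
      · simp
      · intro x y _ _ hx hy Q
        rw [mul_add, map_add]
        exact Ideal.add_mem _ (hx Q) (hy Q)
      · intro a x _ hx Q
        rw [smul_eq_mul, ← mul_assoc]
        exact hx _
  have e := (Submodule.quotEquivOfEq _ _ hker).symm.trans (Ψ.quotKerEquivOfSurjective hsurj)
  have := e.finrank_eq
  rw [Module.finrank_pi_fintype] at this
  simp only [Finset.sum_const, Finset.card_univ, Fintype.card_pi, Fintype.card_fin,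
    Finset.prod_const, smul_eq_mul] at this
  exact this
end


section
open scoped Polynomial
variable {k A : Type*} [Field k] [CommRing A] [Algebra k A]

/-- component of a polynomial modulo `Polynomial.X^m + F`. -/
noncomputable def pcomp (m : ℕ) (F : A) (i : ℕ) : A[X] →ₗ[A] A :=
  Polynomial.lsum fun n => if n % m = i then LinearMap.mulLeft A ((-F)^(n/m)) else 0

theorem pcomp_monomial (m : ℕ) (F : A) (i n : ℕ) (c : A) :
    pcomp m F i (Polynomial.monomial n c) = if n % m = i then (-F)^(n/m) * c else 0 := by
  unfold pcomp
  rw [Polynomial.lsum_apply, Polynomial.sum_monomial_index]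
  · split_ifs <;> simp
  · simp

theorem neg_pow_aux {R : Type*} [CommRing R] (x y : R) (n : ℕ) (h : y^n * x = 0) :
    x * (-y)^n = 0 := by
  rw [neg_pow]
  linear_combination (-1)^n * h

theorem psum (m : ℕ) (hm : 0 < m) (F : A) (I : Ideal A[X]) (hI : Polynomial.C F + Polynomial.X^m ∈ I) (P : A[X]) :
    P - ∑ i ∈ Finset.range m, Polynomial.X^i * Polynomial.C (pcomp m F i P) ∈ I := by
  induction P using Polynomial.induction_on' with
  | add P Q h h' =>
    have := I.add_mem h h'
    convert this using 1
    simp only [map_add, mul_add, Finset.sum_add_distrib]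
    ring
  | monomial n c =>
    have e : ∑ i ∈ Finset.range m, Polynomial.X^i * Polynomial.C (pcomp m F i (Polynomial.monomial n c)) =
        Polynomial.X^(n % m) * Polynomial.C ((-F)^(n/m) * c) := by
      rw [Finset.sum_eq_single (n % m)]
      · rw [pcomp_monomial, if_pos rfl]
      · intro b _ hb
        rw [pcomp_monomial, if_neg hb.symm]; simp
      · intro h
        exact absurd (Finset.mem_range.2 (Nat.mod_lt _ hm)) h
    rw [e, ← Ideal.Quotient.eq_zero_iff_mem]
    rw [← Ideal.Quotient.eq_zero_iff_mem] at hI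
    have h1 : Ideal.Quotient.mk I (Polynomial.X^m) = Ideal.Quotient.mk I (Polynomial.C (-F)) := by
      rw [map_add] at hI
      rw [Polynomial.C_neg, map_neg]
      linear_combination hI
    rw [← Polynomial.C_mul_X_pow_eq_monomial]
    conv_lhs => enter [2, 1, 2, 2]; rw [← Nat.mod_add_div n m]
    rw [pow_add, pow_mul, Polynomial.C_mul, Polynomial.C_pow]
    simp only [map_sub, map_mul, map_pow] at h1 ⊢
    rw [h1]
    ring

theorem finrank_addvar (m q : ℕ) (hm : 0 < m) (F : A) (S : Set A)
    [∀ j : ℕ, FiniteDimensional k (A ⧸ Ideal.span (S ∪ {F^j}))] :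
    Module.finrank k (A[X] ⧸ Ideal.span ((Polynomial.C '' S) ∪ {Polynomial.X^q} ∪ {Polynomial.C F + Polynomial.X^m})) =
      ∑ i ∈ Finset.range m, Module.finrank k (A ⧸ Ideal.span (S ∪ {F^((q+i)/m)})) := by
  set I := Ideal.span ((Polynomial.C '' S) ∪ {Polynomial.X^q} ∪ {Polynomial.C F + Polynomial.X^m}) with hIdef
  -- exponent for component i
  let b : Fin m → ℕ := fun i => (q + (m - 1 - i)) / m
  have hb1 : ∀ i : Fin m, q ≤ m * b i + i := by
    intro i
    have := Nat.lt_mul_div_succ (q + (m-1-i)) hm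
    have := i.2
    simp only [b]
    rw [mul_add] at *
    omega
  have hb2 : ∀ (i : Fin m) (n : ℕ), q ≤ n → n % m = i → b i ≤ n / m := by
    intro i n hn hi
    simp only [b]
    rw [← Nat.lt_add_one_iff, Nat.div_lt_iff_lt_mul hm]
    have h1 := Nat.mod_add_div n m
    have := i.2
    rw [add_mul, mul_comm (n/m)]
    omega
  let Ψ : A[X] →ₗ[k] ((i : Fin m) → A ⧸ Ideal.span (S ∪ {F^(b i)})) :=
    LinearMap.pi fun i => (Ideal.Quotient.mkₐ k _).toLinearMap ∘ₗ (pcomp m F i).restrictScalars k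
  have hΨ : ∀ P i, Ψ P i = Ideal.Quotient.mk _ (pcomp m F i P) := fun P i => rfl
  have hFI : Polynomial.C F + Polynomial.X^m ∈ I := Ideal.subset_span (Or.inr rfl)
  have hXI : Polynomial.X^q ∈ I := Ideal.subset_span (Or.inl (Or.inr rfl))
  have hsurj : Function.Surjective Ψ := by
    intro f
    choose g hg using fun i => Ideal.Quotient.mk_surjective (f i)
    refine ⟨∑ s : Fin m, Polynomial.monomial (s:ℕ) (g s), ?_⟩
    ext i
    rw [hΨ, map_sum, Finset.sum_eq_single i]
    · rw [pcomp_monomial, if_pos (Nat.mod_eq_of_lt i.2), Nat.div_eq_of_lt i.2]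
      simp [hg]
    · intro s _ hs
      rw [pcomp_monomial, if_neg]
      rw [Nat.mod_eq_of_lt s.2]
      exact fun h => hs (Fin.ext h)
    · simp
  have hker : LinearMap.ker Ψ = I.restrictScalars k := by
    ext P
    rw [LinearMap.mem_ker, Submodule.restrictScalars_mem]
    constructor
    · intro h
      have h1 := psum m hm F I hFI P
      refine (Submodule.sub_mem_iff_left I (Ideal.sum_mem _ fun i hi => ?_)).1 h1
      have hi := Finset.mem_range.1 hi
      have h2 : pcomp m F i P ∈ Ideal.span (S ∪ {F^(b ⟨i, hi⟩)}) := by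
        rw [← Ideal.Quotient.eq_zero_iff_mem]
        exact congrFun h ⟨i, hi⟩
      refine Submodule.span_induction (p := fun a _ => Polynomial.X^i * Polynomial.C a ∈ I) ?_ ?_ ?_ ?_ h2
      · rintro x (hx | hx)
        · exact Ideal.mul_mem_left _ _ (Ideal.subset_span (Or.inl (Or.inl ⟨x, hx, rfl⟩)))
        · rw [Set.mem_singleton_iff.1 hx]
          have h3 := hb1 ⟨i, hi⟩
          simp only at h3
          have h4 : (Polynomial.X:A[X])^(m * b ⟨i, hi⟩ + i) ∈ I := by
            rw [← Nat.sub_add_cancel h3, pow_add]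
            exact Ideal.mul_mem_left _ _ hXI
          rw [← Ideal.Quotient.eq_zero_iff_mem] at hFI h4 ⊢
          have h5 : Ideal.Quotient.mk I (Polynomial.C F) = - Ideal.Quotient.mk I (Polynomial.X^m) := by
            rw [map_add] at hFI
            linear_combination hFI
          rw [Polynomial.C_pow, map_mul, map_pow _ (Polynomial.C F), h5]
          rw [pow_add, pow_mul, map_mul, map_pow _ (Polynomial.X^m)] at h4
          exact neg_pow_aux _ _ _ h4
      · simp
      · intro x y _ _ hx hy
        rw [Polynomial.C_add, mul_add]
        exact I.add_mem hx hy
      · intro a x _ hx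
        rw [smul_eq_mul, Polynomial.C_mul, mul_left_comm]
        exact Ideal.mul_mem_left _ _ hx
    · intro h
      ext i
      rw [hΨ]
      change Ideal.Quotient.mk _ _ = 0
      rw [Ideal.Quotient.eq_zero_iff_mem]
      suffices H : ∀ Q, pcomp m F i (Q * P) ∈ Ideal.span (S ∪ {F^(b i)}) by simpa using H 1
      refine Submodule.span_induction
        (p := fun P _ => ∀ Q, pcomp m F i (Q * P) ∈ Ideal.span (S ∪ {F^(b i)})) ?_ ?_ ?_ ?_ h
      · intro x hx Q
        induction Q using Polynomial.induction_on' with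
        | add Q Q' h h' => rw [add_mul, map_add]; exact Ideal.add_mem _ h h'
        | monomial n c =>
          rcases hx with (⟨y, hy, rfl⟩ | hx) | hx
          · rw [Polynomial.monomial_mul_C, pcomp_monomial]
            split_ifs
            · exact Ideal.mul_mem_left _ _ (Ideal.mul_mem_left _ _ (Ideal.subset_span (Or.inl hy)))
            · simp
          · rw [Set.mem_singleton_iff.1 hx, Polynomial.monomial_mul_X_pow, pcomp_monomial]
            split_ifs with h
            · have := hb2 i (n+q) (by omega) h
              refine Ideal.mul_mem_right _ _ ?_
              rw [neg_pow]
              refine Ideal.mul_mem_left _ _ ?_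
              rw [← Nat.sub_add_cancel this, pow_add]
              exact Ideal.mul_mem_left _ _ (Ideal.subset_span (Or.inr rfl))
            · simp
          · rw [Set.mem_singleton_iff.1 hx, mul_add, map_add, Polynomial.monomial_mul_C, Polynomial.monomial_mul_X_pow,
              pcomp_monomial, pcomp_monomial, Nat.add_mod_right, Nat.add_div_right _ hm]
            split_ifs
            · convert Ideal.zero_mem _ using 1
              rw [pow_succ]; ring
            · simp
      · simp
      · intro x y _ _ hx hy Q
        rw [mul_add, map_add]
        exact Ideal.add_mem _ (hx Q) (hy Q)
      · intro a x _ hx Q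
        rw [smul_eq_mul, ← mul_assoc]
        exact hx _
  have e := (Submodule.quotEquivOfEq _ _ hker).symm.trans (Ψ.quotKerEquivOfSurjective hsurj)
  have := e.finrank_eq
  rw [Module.finrank_pi_fintype] at this
  refine Eq.trans this ?_
  rw [← Finset.sum_range_reflect, Finset.sum_range]

end

theorem conc_three (D : ℕ → ℝ) (hD : ∀ n, D (n+2) + D n ≤ 2 * D (n+1)) (x y z : ℕ)
    (hxy : x ≤ y) (hyz : y ≤ z) :
    ((z:ℝ) - y) * D x + ((y:ℝ) - x) * D z ≤ ((z:ℝ) - x) * D y := by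
  have anti : Antitone (fun n => D (n+1) - D n) := antitone_nat_of_succ_le fun n => by
    have := hD n; simp only [add_assoc]; norm_num; linarith
  have h1 : ((y:ℝ) - x) * (D (y+1) - D y) ≤ D y - D x := by
    obtain ⟨t, rfl⟩ := Nat.exists_eq_add_of_le hxy
    have : ∀ s ≤ t, (s:ℝ) * (D (x+t+1) - D (x+t)) ≤ D (x+s) - D x := by
      intro s
      induction s with
      | zero => simp
      | succ s ih =>
        intro hs
        have h2 := ih (by omega)
        have h3 := anti (show x + s ≤ x + t by omega)
        simp only at h3
        push_cast
        rw [← add_assoc x s 1]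
        linarith
    have := this t le_rfl
    push_cast
    linarith
  have h2 : D z - D y ≤ ((z:ℝ) - y) * (D (y+1) - D y) := by
    obtain ⟨t, rfl⟩ := Nat.exists_eq_add_of_le hyz
    have : ∀ s, D (y+s) - D y ≤ (s:ℝ) * (D (y+1) - D y) := by
      intro s
      induction s with
      | zero => simp
      | succ s ih =>
        have h3 := anti (show y ≤ y + s by omega)
        simp only at h3
        push_cast
        rw [← add_assoc y s 1]
        linarith
    have := this t
    push_cast
    linarith
  have a1 : (0:ℝ) ≤ (z:ℝ) - y := sub_nonneg.2 (by exact_mod_cast hyz)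
  have a2 : (0:ℝ) ≤ (y:ℝ) - x := sub_nonneg.2 (by exact_mod_cast hxy)
  nlinarith [mul_le_mul_of_nonneg_left h1 a1, mul_le_mul_of_nonneg_left h2 a2]

theorem hermite_sum (m N : ℕ) (hm : 0 < m) : ∑ i ∈ Finset.range m, (N + i) / m = N := by
  induction N with
  | zero =>
    refine Finset.sum_eq_zero fun i hi => ?_
    have := Finset.mem_range.1 hi
    simpa using Nat.div_eq_of_lt this
  | succ N ih =>
    have h1 := Finset.sum_range_succ (fun i => (N + i) / m) m
    have h2 := Finset.sum_range_succ' (fun i => (N + i) / m) m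
    rw [h1, ih, Nat.add_div_right _ hm] at h2
    simp only [add_zero] at h2
    have : ∀ i, N + 1 + i = N + (i + 1) := fun i => by omega
    simp only [this]
    omega

theorem conc_final (p a d : ℕ) (hpa : p = 2 * a + 1) (ha : 2 ≤ a) (D : ℕ → ℕ → ℝ)
    (conc : ∀ e n, D e (n+2) + D e n ≤ 2 * D e (n+1))
    (frob : ∀ e j, D (e+1) (p * j) = (p:ℝ)^d * D e j)
    (C : ℝ) (bd : ∀ e j, D e j ≤ C * (p:ℝ)^(d*e))
    (strict : D 1 a < a * D 1 1) :
    ∃ L_R L_S : ℝ,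
      Filter.Tendsto (fun e : ℕ => (∑ i ∈ Finset.range 2, D e ((p^e + i)/2)) / (p:ℝ)^(d*e))
        Filter.atTop (nhds L_R) ∧
      Filter.Tendsto (fun e : ℕ => (∑ i ∈ Finset.range 3, D e ((p^e + i)/3)) / (p:ℝ)^(d*e))
        Filter.atTop (nhds L_S) ∧ L_S > L_R := by
  have hp0 : (0:ℝ) < p := by rw [hpa]; positivity
  have hpp : ∀ n, (0:ℝ) < (p:ℝ)^n := fun n => pow_pos hp0 n
  have hermR : ∀ m N : ℕ, 0 < m → ∑ i ∈ Finset.range m, (((N + i) / m : ℕ) : ℝ) = N := by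
    intro m N hm
    exact_mod_cast hermite_sum m N hm
  have conv : ∀ m : ℕ, 0 < m → ∃ L : ℝ, Filter.Tendsto
      (fun e : ℕ => (∑ i ∈ Finset.range m, D e ((p^e + i)/m)) / (p:ℝ)^(d*e))
        Filter.atTop (nhds L) := by
    intro m hm
    have mono : Monotone (fun e : ℕ => (∑ i ∈ Finset.range m, D e ((p^e + i)/m)) / (p:ℝ)^(d*e)) := by
      refine monotone_nat_of_le_succ fun e => ?_
      rw [div_le_div_iff₀ (hpp _) (hpp _), show d * (e+1) = d * e + d by ring, pow_add, ← mul_assoc,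
        mul_right_comm, mul_comm _ ((p:ℝ)^d)]
      refine mul_le_mul_of_nonneg_right ?_ (hpp _).le
      rw [Finset.mul_sum]
      simp only [← frob]
      set q := p ^ e
      have hq : p ^ (e+1) = p * q := by rw [pow_succ']
      rw [hq]
      set B := q / m with hB
      have b1 : m * B ≤ q := Nat.mul_div_le q m
      have b2 : q + 1 ≤ m * (B + 1) := Nat.lt_mul_div_succ q hm
      have lo : ∀ i, p * B ≤ (p * q + i) / m := by
        intro i
        rw [Nat.le_div_iff_mul_le hm]
        have := Nat.mul_le_mul_left p b1
        nlinarith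
      have hi : ∀ i, i < m → (p * q + i) / m ≤ p * (B+1) := by
        intro i hi
        rw [← Nat.lt_add_one_iff, Nat.div_lt_iff_lt_mul hm]
        have := Nat.mul_le_mul_left p b2
        nlinarith
      have lo' : ∀ i, B ≤ (q + i) / m := fun i => Nat.div_le_div_right (by omega)
      have hi' : ∀ i, i < m → (q + i) / m ≤ B+1 := by
        intro i hi
        rw [← Nat.lt_add_one_iff, Nat.div_lt_iff_lt_mul hm]
        nlinarith
      refine le_of_mul_le_mul_left (a := (p:ℝ)) ?_ hp0
      rw [Finset.mul_sum, Finset.mul_sum]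
      set E := D (e+1)
      have R1 : ∑ i ∈ Finset.range m, (p:ℝ) * E (p * ((q+i)/m)) =
          ∑ i ∈ Finset.range m, (((p:ℝ)*(B+1) - p * ((q+i)/m : ℕ)) * E (p*B) +
            ((p:ℝ) * ((q+i)/m : ℕ) - p * B) * E (p*(B+1))) := by
        refine Finset.sum_congr rfl fun i him => ?_
        have h1 := lo' i
        have h2 := hi' i (Finset.mem_range.1 him)
        have : (q+i)/m = B ∨ (q+i)/m = B+1 := by omega
        rcases this with h | h <;> rw [h] <;> push_cast <;> ring
      have R2 : ∑ i ∈ Finset.range m, (((p:ℝ)*(B+1) - ((p*q+i)/m : ℕ)) * E (p*B) +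
            ((((p*q+i)/m : ℕ):ℝ) - p * B) * E (p*(B+1))) ≤
          ∑ i ∈ Finset.range m, (p:ℝ) * E ((p*q+i)/m) := by
        refine Finset.sum_le_sum fun i him => ?_
        have := conc_three E (conc (e+1)) _ _ _ (lo i) (hi i (Finset.mem_range.1 him))
        push_cast at this ⊢
        linarith
      rw [R1]
      refine le_trans (le_of_eq ?_) R2
      rw [Finset.sum_add_distrib, Finset.sum_add_distrib, ← Finset.sum_mul, ← Finset.sum_mul,
        ← Finset.sum_mul, ← Finset.sum_mul]
      simp only [Finset.sum_sub_distrib, ← Finset.mul_sum, hermR m _ hm]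
      push_cast
      ring
    refine ⟨_, tendsto_atTop_ciSup mono ⟨m * C, ?_⟩⟩
    rintro _ ⟨e, rfl⟩
    simp only
    rw [div_le_iff₀ (hpp _)]
    refine (Finset.sum_le_sum fun i _ => bd e _).trans ?_
    simp [mul_assoc]
  obtain ⟨LR, hR⟩ := conv 2 (by norm_num)
  obtain ⟨LS, hS⟩ := conv 3 (by norm_num)
  refine ⟨LR, LS, hR, hS, ?_⟩
  have ha1 : (0:ℝ) < a - 1 := by
    have : (2:ℝ) ≤ a := by exact_mod_cast ha
    linarith
  set c : ℝ := (a * D 1 1 - D 1 a) / ((a - 1) * (p:ℝ)^d) with hc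
  have hc0 : 0 < c := div_pos (by linarith) (mul_pos ha1 (hpp _))
  suffices LR + c ≤ LS by linarith
  refine le_of_tendsto_of_tendsto ((hR.add_const c)) hS ?_
  filter_upwards [Filter.eventually_ge_atTop 1] with e he
  obtain ⟨e, rfl⟩ := Nat.exists_eq_add_of_le' he
  have frob' : ∀ e j, D (e+1) (p^e * j) = (p:ℝ)^(d*e) * D 1 j := by
    intro e
    induction e with
    | zero => simp
    | succ e ih =>
      intro j
      rw [pow_succ', mul_assoc, frob, ih]
      ring
  have f1 := frob' e 1
  have f2 := frob' e a
  rw [mul_one] at f1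
  rw [le_div_iff₀ (hpp _), add_mul, div_mul_cancel₀ _ (hpp _).ne']
  set E := D (e+1)
  set P := p ^ e with hP
  have hPpos : 0 < P := by rw [hP, hpa]; positivity
  have hPR : (0:ℝ) < P := by exact_mod_cast hPpos
  have hq : p ^ (e+1) = (2*a+1) * P := by rw [pow_succ', ← hpa]
  have G3 : ((3:ℝ)*a*P - (2*a+1)*P) * E P + ((2*a+1)*P - 3*P) * E (P*a) ≤
      ((a-1)*P) * ∑ i ∈ Finset.range 3, E ((p^(e+1)+i)/3) := by
    have hs := hermR 3 (p^(e+1)) (by norm_num)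
    have : ∀ i ∈ Finset.range 3, ((a:ℝ)*P - (((p^(e+1)+i)/3 : ℕ):ℝ)) * E P +
        ((((p^(e+1)+i)/3 : ℕ):ℝ) - P) * E (P*a) ≤ ((a-1)*P) * E ((p^(e+1)+i)/3) := by
      intro i hi
      have hi := Finset.mem_range.1 hi
      have := conc_three E (conc (e+1)) P ((p^(e+1)+i)/3) (P*a)
        (by rw [Nat.le_div_iff_mul_le (by norm_num), hq]; nlinarith)
        (by rw [← Nat.lt_add_one_iff, Nat.div_lt_iff_lt_mul (by norm_num), hq]; nlinarith)
      push_cast at this ⊢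
      linarith
    have := Finset.sum_le_sum this
    rw [Finset.sum_add_distrib, ← Finset.sum_mul, ← Finset.sum_mul, Finset.sum_sub_distrib,
      Finset.sum_sub_distrib, hs, hq] at this
    rw [hq, Finset.mul_sum]
    simp only [Finset.sum_const, Finset.card_range, nsmul_eq_mul] at this
    push_cast at this
    linarith
  have G2 : ((a-1)*P) * ∑ i ∈ Finset.range 2, E ((p^(e+1)+i)/2) ≤
      ((2:ℝ)*a*P - (2*a+1)*P) * E P + ((2*a+1)*P - 2*P) * E (P*a) := by
    have hs := hermR 2 (p^(e+1)) (by norm_num)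
    have : ∀ i ∈ Finset.range 2, ((a-1)*P) * E ((p^(e+1)+i)/2) ≤
        ((a:ℝ)*P - (((p^(e+1)+i)/2 : ℕ):ℝ)) * E P +
        ((((p^(e+1)+i)/2 : ℕ):ℝ) - P) * E (P*a) := by
      intro i hi
      have hi := Finset.mem_range.1 hi
      have := conc_three E (conc (e+1)) P (P*a) ((p^(e+1)+i)/2)
        (by nlinarith)
        (by rw [Nat.le_div_iff_mul_le (by norm_num), hq]; nlinarith)
      push_cast at this ⊢
      linarith
    have := Finset.sum_le_sum this
    rw [Finset.sum_add_distrib, ← Finset.sum_mul, ← Finset.sum_mul, Finset.sum_sub_distrib,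
      Finset.sum_sub_distrib, hs, hq] at this
    rw [hq, Finset.mul_sum]
    simp only [Finset.sum_const, Finset.card_range, nsmul_eq_mul] at this
    push_cast at this
    linarith
  rw [f1, f2] at G3 G2
  have hcd : c * (p:ℝ)^(d*(e+1)) * (a-1) = (a * D 1 1 - D 1 a) * (p:ℝ)^(d*e) := by
    rw [hc, show d * (e+1) = d + d * e by ring, pow_add]
    field_simp
  refine le_of_mul_le_mul_left (a := (((a:ℝ)-1)*P)) ?_ (mul_pos ha1 hPR)
  linear_combination G3 + G2 + (P:ℝ) * hcd

section
variable {k : Type*} [Field k] {n : ℕ}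

theorem fin_quot (I : Ideal (MvPolynomial (Fin n) k)) (q : ℕ) (hq : 0 < q) (h : ∀ i, X i ^ q ∈ I) :
    FiniteDimensional k (MvPolynomial (Fin n) k ⧸ I) := by
  have hint : Algebra.IsIntegral k (MvPolynomial (Fin n) k ⧸ I) := by
    refine ⟨fun x => ?_⟩
    obtain ⟨P, rfl⟩ := Ideal.Quotient.mk_surjective x
    induction P using MvPolynomial.induction_on with
    | C a => exact isIntegral_algebraMap (x := a)
    | add P Q h h' => rw [map_add]; exact h.add h'
    | mul_X P i hP =>
      rw [map_mul]
      refine hP.mul ?_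
      refine IsIntegral.of_pow hq ?_
      rw [← map_pow, Ideal.Quotient.eq_zero_iff_mem.2 (h i)]
      exact isIntegral_zero
  exact Algebra.IsIntegral.finite

theorem fin_HK (p e : ℕ) (hp : 0 < p) (T : Set (MvPolynomial (Fin n) k)) :
    FiniteDimensional k (MvPolynomial (Fin n) k ⧸ Ideal.span
      (Set.range (fun i : Fin n => (X i : MvPolynomial (Fin n) k) ^ p ^ e) ∪ T)) :=
  fin_quot _ (p^e) (by positivity) fun i => Ideal.subset_span (Or.inl ⟨i, rfl⟩)

theorem HK_expand (p e : ℕ) (hp : 0 < p) (f : MvPolynomial (Fin n) k) :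
    HKfun k n p (e+1) (expand p f) = p ^ n * HKfun k n p e f := by
  have := fin_HK p e hp {f}
  unfold HKfun
  rw [← finrank_expand p hp]
  have : (expand p '' (Set.range (fun i : Fin n => (X i : MvPolynomial (Fin n) k) ^ p ^ e) ∪ {f}))
      = (Set.range (fun i : Fin n => (X i : MvPolynomial (Fin n) k) ^ p ^ (e+1)) ∪ {expand p f}) := by
    rw [Set.image_union, Set.image_singleton, ← Set.range_comp]
    congr 2
    ext1 i
    simp [← pow_mul, pow_succ']
  rw [this]

theorem HK_le (p e : ℕ) (hp : 0 < p) (f : MvPolynomial (Fin n) k) :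
    HKfun k n p e f ≤ HKfun k n p 0 0 * p ^ (n * e) := by
  have h0 : HKfun k n p e (0 : MvPolynomial (Fin n) k) = HKfun k n p 0 0 * p ^ (n * e) := by
    induction e with
    | zero => simp
    | succ e ih =>
      have := HK_expand p e hp (0 : MvPolynomial (Fin n) k)
      rw [map_zero, ih] at this
      rw [this]
      ring
  rw [← h0]
  unfold HKfun
  have := fin_HK (k := k) (n := n) p e hp {0}
  have hle : Ideal.span (Set.range (fun i : Fin n => (X i : MvPolynomial (Fin n) k) ^ p ^ e) ∪ {0})
    ≤ Ideal.span (Set.range (fun i : Fin n => (X i : MvPolynomial (Fin n) k) ^ p ^ e) ∪ {f}) := by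
    rw [Ideal.span_le]
    rintro x (hx | hx)
    · exact Ideal.subset_span (Or.inl hx)
    · rw [Set.mem_singleton_iff.1 hx]; exact Ideal.zero_mem _
  exact LinearMap.finrank_le_finrank_of_surjective (f := (Ideal.Quotient.factorₐ k hle).toLinearMap)
    (Ideal.Quotient.factor_surjective hle)

theorem HK_addvar (p e m : ℕ) (hp : 0 < p) (hm : 0 < m) (F : MvPolynomial (Fin n) k) :
    HKfun k (n+1) p e (rename Fin.castSucc F + X (Fin.last n) ^ m) =
      ∑ i ∈ Finset.range m, HKfun k n p e (F ^ ((p^e + i)/m)) := by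
  let φ : MvPolynomial (Fin (n+1)) k ≃ₐ[k] Polynomial (MvPolynomial (Fin n) k) :=
    (renameEquiv k finSuccEquivLast).trans (optionEquivLeft k (Fin n))
  have φl : φ (X (Fin.last n)) = Polynomial.X := by
    simp [φ]
  have φc : ∀ P, φ (rename Fin.castSucc P) = Polynomial.C P := by
    intro P
    induction P using MvPolynomial.induction_on with
    | C a => simp [φ]
    | add P Q h h' => simp only [map_add, h, h']
    | mul_X P i hP =>
      rw [map_mul, map_mul, map_mul, hP]
      simp [φ]
  have := fun j : ℕ => fin_HK p e hp {F ^ j}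
  have key := finrank_addvar (k := k) m (p^e) hm F (Set.range (fun i : Fin n => (X i : MvPolynomial (Fin n) k) ^ p ^ e))
  unfold HKfun
  rw [← key]
  refine (Ideal.quotientEquivAlg _ _ φ ?_).toLinearEquiv.finrank_eq
  rw [Ideal.map_span]
  congr 1
  have h2 : ∀ i : Fin n, φ (X i.castSucc) = Polynomial.C (X i) := by
    intro i
    rw [← φc, rename_X]
  ext P
  constructor
  · rintro ((⟨_, ⟨i, rfl⟩, rfl⟩ | hx) | hx)
    · refine ⟨X i.castSucc ^ p^e, Or.inl ⟨_, rfl⟩, ?_⟩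
      simp [h2]
    · refine ⟨X (Fin.last n) ^ p^e, Or.inl ⟨_, rfl⟩, ?_⟩
      rw [Set.mem_singleton_iff.1 hx]
      simp [φl]
    · refine ⟨_, Or.inr rfl, ?_⟩
      rw [Set.mem_singleton_iff.1 hx]
      simp [φl, φc]
  · rintro ⟨_, ⟨i, rfl⟩ | hx, rfl⟩
    · refine Fin.lastCases ?_ (fun i => ?_) i
      · left; right
        simp [φl]
      · left; left
        exact ⟨X i ^ p^e, ⟨i, rfl⟩, by simp [h2]⟩
    · right
      rw [Set.mem_singleton_iff.1 hx]
      simp [φl, φc]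

theorem HK_double (p e : ℕ) (f : MvPolynomial (Fin n) k) :
    HKfun k n p e f = Module.finrank k
      ((MvPolynomial (Fin n) k ⧸ Ideal.span (Set.range (fun i : Fin n => (X i : MvPolynomial (Fin n) k) ^ p ^ e)))
        ⧸ Ideal.span {Ideal.Quotient.mk (Ideal.span (Set.range (fun i : Fin n => (X i : MvPolynomial (Fin n) k) ^ p ^ e))) f}) := by
  unfold HKfun
  have h1 : Ideal.span (Set.range (fun i : Fin n => (X i : MvPolynomial (Fin n) k) ^ p ^ e) ∪ {f}) =
    Ideal.span (Set.range (fun i : Fin n => (X i : MvPolynomial (Fin n) k) ^ p ^ e)) ⊔ Ideal.span {f} :=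
    Ideal.span_union _ _
  have h2 : Ideal.span {Ideal.Quotient.mk (Ideal.span (Set.range (fun i : Fin n => (X i : MvPolynomial (Fin n) k) ^ p ^ e))) f}
    = (Ideal.span {f}).map (Ideal.Quotient.mkₐ k (Ideal.span (Set.range (fun i : Fin n => (X i : MvPolynomial (Fin n) k) ^ p ^ e)))) := by
    rw [Ideal.map_span, Set.image_singleton]; rfl
  rw [h1, h2]
  exact (DoubleQuot.quotQuotEquivQuotSupₐ k _ _).symm.toLinearEquiv.finrank_eq

theorem HK_double_pow (p e : ℕ) (F : MvPolynomial (Fin n) k) (j : ℕ) :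
    HKfun k n p e (F ^ j) = Module.finrank k
      ((MvPolynomial (Fin n) k ⧸ Ideal.span (Set.range (fun i : Fin n => (X i : MvPolynomial (Fin n) k) ^ p ^ e)))
        ⧸ Ideal.span {Ideal.Quotient.mk (Ideal.span (Set.range (fun i : Fin n => (X i : MvPolynomial (Fin n) k) ^ p ^ e))) F ^ j}) := by
  rw [HK_double, map_pow]

theorem HK_conc (p e : ℕ) (hp : 0 < p) (F : MvPolynomial (Fin n) k) (j : ℕ) :
    HKfun k n p e (F ^ (j+2)) + HKfun k n p e (F ^ j) ≤ 2 * HKfun k n p e (F ^ (j+1)) := by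
  have : FiniteDimensional k (MvPolynomial (Fin n) k ⧸
      Ideal.span (Set.range (fun i : Fin n => (X i : MvPolynomial (Fin n) k) ^ p ^ e))) :=
    fin_quot _ (p^e) (by positivity) fun i => Ideal.subset_span ⟨i, rfl⟩
  rw [HK_double_pow, HK_double_pow, HK_double_pow]
  exact quot_conc (k := k) _ j

theorem top_not_mem (q : ℕ) (hq : 0 < q) (c : k) (hc : c ≠ 0) :
    C c * ∏ i : Fin n, X i ^ (q-1) ∉
      Ideal.span (Set.range (fun i : Fin n => (X i : MvPolynomial (Fin n) k) ^ q)) := by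
  intro h
  have e1 : C c * ∏ i : Fin n, X i ^ (q-1) = monomial (Finsupp.equivFunOnFinite.symm fun _ : Fin n => q-1) c := by
    rw [monomial_eq, Finsupp.prod_fintype _ _ (by simp)]
    simp
  have e2 : Set.range (fun i : Fin n => (X i : MvPolynomial (Fin n) k) ^ q) =
      (fun s => monomial s (1:k)) '' Set.range (fun i : Fin n => Finsupp.single i q) := by
    rw [← Set.range_comp]
    congr 1
    ext1 i
    simp [X_pow_eq_monomial]
  rw [e1, e2, mem_ideal_span_monomial_image] at h
  obtain ⟨_, ⟨i, rfl⟩, h⟩ := h (Finsupp.equivFunOnFinite.symm fun _ : Fin n => q-1)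
    (by classical rw [support_monomial, if_neg hc]; simp)
  have := h i
  simp at this
  omega

theorem HK_main (p : ℕ) (hp : p.Prime) (hp3 : 3 < p) [CharP k p] (d : ℕ) (hd : 2 ≤ d) :
    ∃ L_R L_S : ℝ,
      Filter.Tendsto
        (fun e : ℕ => (HKfun k (d + 1) p e
          (rename Fin.castSucc (∑ i : Fin d, X i ^ 2) + X (Fin.last d) ^ 2) : ℝ) / (p : ℝ) ^ (d * e))
        Filter.atTop (nhds L_R) ∧
      Filter.Tendsto
        (fun e : ℕ => (HKfun k (d + 1) p e
          (rename Fin.castSucc (∑ i : Fin d, X i ^ 2) + X (Fin.last d) ^ 3) : ℝ) / (p : ℝ) ^ (d * e))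
        Filter.atTop (nhds L_S) ∧
      L_S > L_R := by
  have : Fact p.Prime := ⟨hp⟩
  have hp0 := hp.pos
  obtain ⟨a, hpa⟩ : ∃ a, p = 2 * a + 1 := hp.odd_of_ne_two (by omega)
  have ha : 2 ≤ a := by omega
  simp only [HK_addvar p _ _ hp0 (show 0 < 2 by norm_num), HK_addvar p _ _ hp0 (show 0 < 3 by norm_num)]
  push_cast
  set F : MvPolynomial (Fin d) k := ∑ i : Fin d, X i ^ 2 with hF
  have hfin : ∀ e, FiniteDimensional k (MvPolynomial (Fin d) k ⧸
      Ideal.span (Set.range (fun i : Fin d => (X i : MvPolynomial (Fin d) k) ^ p ^ e))) := fun e =>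
    fin_quot _ (p^e) (by positivity) fun i => Ideal.subset_span ⟨i, rfl⟩
  refine conc_final p a d hpa ha (fun e j => (HKfun k d p e (F ^ j) : ℝ)) ?_ ?_
    (HKfun k d p 0 (0 : MvPolynomial (Fin d) k)) ?_ ?_
  · intro e n
    exact_mod_cast HK_conc p e hp0 F n
  · intro e j
    have : F ^ (p * j) = expand p (F ^ j) := by
      rw [pow_mul, map_pow, hF, sum_pow_char]
      simp [← pow_mul, mul_comm]
    simp only [this, HK_expand p e hp0]
    push_cast
    rfl
  · intro e j
    exact_mod_cast HK_le p e hp0 (F ^ j)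
  · have := hfin 1
    obtain ⟨b, rfl⟩ := Nat.exists_eq_add_of_le' ha
    obtain ⟨d, rfl⟩ := Nat.exists_eq_add_of_le' hd
    set I := Ideal.span (Set.range (fun i : Fin (d+2) => (X i : MvPolynomial (Fin (d+2)) k) ^ p ^ 1)) with hI
    let x : ℕ → MvPolynomial (Fin (d+2)) k ⧸ I := fun i =>
      if h : i < d+2 then Ideal.Quotient.mk I (X ⟨i, h⟩) else 0
    have hx : ∀ i, x i ^ p = 0 := by
      intro i
      simp only [x]
      split_ifs with h
      · rw [← map_pow, Ideal.Quotient.eq_zero_iff_mem]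
        exact Ideal.subset_span ⟨⟨i, h⟩, by simp⟩
      · exact zero_pow hp.ne_zero
    obtain ⟨g, g', h1, h2, c, hc, h3⟩ := cert_all p (b+2) hp hpa ha x hx d
    have hxF : ∑ i ∈ Finset.range (d+2), x i ^ 2 = Ideal.Quotient.mk I F := by
      rw [Finset.sum_range, hF, map_sum]
      refine Finset.sum_congr rfl fun i _ => ?_
      simp [x]
    rw [hxF] at h1 h2
    have hne : g * g' ≠ 0 := by
      rw [h3, Finset.prod_range]
      have : (c : MvPolynomial (Fin (d+2)) k ⧸ I) * ∏ i : Fin (d+2), x i ^ (p-1) =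
          Ideal.Quotient.mk I (C (c : k) * ∏ i : Fin (d+2), X i ^ (p-1)) := by
        rw [map_mul, map_prod]
        congr 1
        refine Finset.prod_congr rfl fun i _ => ?_
        simp [x]
      rw [this, Ne, Ideal.Quotient.eq_zero_iff_mem, hI]
      simp only [pow_one]
      refine top_not_mem p hp0 _ ?_
      rwa [Ne, CharP.intCast_eq_zero_iff k p]
    have := quot_strict (k := k) (Ideal.Quotient.mk I F) g g' (b+1) h1 h2 hne
    rw [hI, ← HK_double_pow, ← HK_double_pow] at this
    exact_mod_cast this
end

/-- For every prime `p > 3` and `d ≥ 2`, the Hilbert–Kunz multiplicities of the `A₁`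
singularity (defined by `x_0² + ⋯ + x_d²`) and of the `A₂` singularity
(defined by `x_0² + ⋯ + x_{d−1}² + x_d³`) exist, and `e_HK(S_{p,d}) > e_HK(R_{p,d})`. -/
theorem eHK_A2_gt_A1_large_char (p : ℕ) (hp : p.Prime) (hp3 : 3 < p)
    (k : Type*) [Field k] [CharP k p] (d : ℕ) (hd : 2 ≤ d) :
    ∃ L_R L_S : ℝ,
      Filter.Tendsto
        (fun e : ℕ =>
          (HKfun k (d + 1) p e (∑ i : Fin (d + 1), X i ^ 2) : ℝ) / (p : ℝ) ^ (d * e))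
        Filter.atTop (nhds L_R) ∧
      Filter.Tendsto
        (fun e : ℕ =>
          (HKfun k (d + 1) p e
              ((∑ i : Fin d, (X (i.castSucc) : MvPolynomial (Fin (d + 1)) k) ^ 2) +
                X (Fin.last d) ^ 3) : ℝ) / (p : ℝ) ^ (d * e))
        Filter.atTop (nhds L_S) ∧
      L_S > L_R := by
  obtain ⟨LR, LS, h1, h2, h3⟩ := HK_main (k := k) p hp hp3 d hd
  refine ⟨LR, LS, ?_, ?_, h3⟩
  · convert h1 using 5
    rw [Fin.sum_univ_castSucc]
    simp
  · convert h2 using 5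
    simp
end

section
/- Let p > 3 be a prime, let k be a field of characteristic p, and let d ≥ 2. Then dim_k( k[x_0,…,x_d]/(x_0^p,…,x_d^p, x_0² + ⋯ + x_{d−1}² + x_d³) ) + p^{d−1} ≥ dim_k( k[x_0,…,x_d]/(x_0^p,…,x_d^p, x_0² + x_1² + ⋯ + x_d²) ) + dim_k( k[y_0,…,y_{d−1}]/(y_0^p,…,y_{d−1}^p, y_0² + ⋯ + y_{d−1}²) ). That is, HK_1(S_{p,d}) − HK_1(R_{p,d}) ≥ HK_1(R_{p,d−1}) − p^{d−1}. -/
section HKaux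
open Polynomial

theorem aux_finrank_quot {k R S : Type*} [Field k] [CommRing R] [CommRing S] [Algebra k R]
    [Algebra k S] (φ : R →ₐ[k] S) (hφ : Function.Surjective φ) (I : Ideal R) (J : Ideal S)
    (hI : RingHom.ker φ ≤ I) (hJ : I.map φ = J) :
    Nonempty ((R ⧸ I) ≃ₐ[k] (S ⧸ J)) := by
  subst hJ
  let f : R →ₐ[k] (S ⧸ I.map φ) := (Ideal.Quotient.mkₐ k (I.map φ)).comp φ
  have hf : Function.Surjective f := (Ideal.Quotient.mkₐ_surjective k _).comp hφ
  have hk : RingHom.ker f = I := by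
    have h1 : RingHom.ker f = Ideal.comap φ (I.map φ) := by
      ext x
      simp [f, RingHom.mem_ker, Ideal.Quotient.eq_zero_iff_mem]
    rw [h1, Ideal.comap_map_of_surjective φ hφ]
    exact sup_eq_left.2 hI
  exact ⟨(Ideal.quotientEquivAlgOfEq k hk.symm).trans
    (Ideal.quotientKerAlgEquivOfSurjective hf)⟩

theorem aux_finite {k A : Type*} [Field k] [CommRing A] [Algebra k A] [Module.Finite k A]
    (g : A[X]) (hg : g.Monic) (I : Ideal A[X]) (h : g ∈ I) : Module.Finite k (A[X] ⧸ I) := by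
  have := hg.finite_quotient
  have : Module.Finite k (A[X] ⧸ Ideal.span {g}) := Module.Finite.trans A _
  have hle : Ideal.span {g} ≤ I := by
    rw [Ideal.span_le]; simpa using h
  exact Module.Finite.of_surjective (Ideal.Quotient.factorₐ k hle).toLinearMap
    (Ideal.Quotient.factor_surjective hle)

/-- linear case -/
theorem aux_lin {k A : Type*} [Field k] [CommRing A] [Algebra k A] (t : A) (a : ℕ) :
    Module.finrank k (A[X] ⧸ Ideal.span {(X : A[X]) ^ a, X + C t}) =
      Module.finrank k (A ⧸ Ideal.span {t ^ a}) := by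
  let φ : A[X] →ₐ[k] A := (Polynomial.aeval (R := A) (-t)).restrictScalars k
  have hφ : Function.Surjective φ := fun x => ⟨C x, by simp [φ]⟩
  suffices h : RingHom.ker φ ≤ Ideal.span {(X : A[X]) ^ a, X + C t} ∧
      (Ideal.span {(X : A[X]) ^ a, X + C t}).map φ = Ideal.span {t ^ a} by
    obtain ⟨e⟩ := aux_finrank_quot φ hφ _ _ h.1 h.2
    exact e.toLinearEquiv.finrank_eq
  constructor
  · have h1 := Polynomial.ker_evalRingHom (-t)
    intro x hx
    have : x ∈ RingHom.ker (evalRingHom (-t)) := by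
      simpa [RingHom.mem_ker, φ, Polynomial.aeval_def, Polynomial.eval₂_eq_eval_map] using hx
    rw [h1] at this
    refine Ideal.span_mono ?_ this
    simp
  · rw [Ideal.map_span, Set.image_pair]
    have h1 : φ (X ^ a) = (-t) ^ a := by simp [φ]
    have h2 : φ (X + C t) = 0 := by simp [φ]
    rw [h1, h2, Set.pair_comm, Ideal.span_insert_zero, neg_pow, mul_comm]
    exact Ideal.span_singleton_mul_right_unit ((isUnit_one.neg).pow a) _

/-- the decomposition map -/
noncomputable def auxPhi (k A : Type*) [Field k] [CommRing A] [Algebra k A] (e : ℕ) :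
    (Fin e → A[X]) →ₗ[k] A[X] where
  toFun F := ∑ i : Fin e, X ^ (i : ℕ) * expand A e (F i)
  map_add' F G := by simp [mul_add, Finset.sum_add_distrib]
  map_smul' c F := by
    simp only [Pi.smul_apply, RingHom.id_apply, Finset.smul_sum]
    refine Finset.sum_congr rfl fun i _ => ?_
    rw [← algebraMap_smul A c (F i), map_smul, algebraMap_smul, mul_smul_comm]

theorem auxPhi_coeff {k A : Type*} [Field k] [CommRing A] [Algebra k A] (e : ℕ)
    (F : Fin e → A[X]) (n : ℕ) (j : Fin e) :
    (auxPhi k A e F).coeff (e * n + j) = (F j).coeff n := by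
  have he : 0 < e := j.pos
  simp only [auxPhi, LinearMap.coe_mk, AddHom.coe_mk, finsetSum_coeff]
  rw [Finset.sum_eq_single j]
  · rw [coeff_X_pow_mul, mul_comm e n, coeff_expand_mul he]
  · intro i _ hij
    rw [coeff_X_pow_mul']
    split_ifs with h
    · rw [coeff_expand he, if_neg]
      rintro ⟨c, hc⟩
      apply hij
      have h1 : e * n + (j : ℕ) = e * c + i := by omega
      have h2 := congrArg (· % e) h1
      simp only [Nat.mul_add_mod, Nat.mod_eq_of_lt j.2, Nat.mod_eq_of_lt i.2] at h2
      exact Fin.ext h2.symm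
    · rfl
  · simp

theorem auxPhi_single {k A : Type*} [Field k] [CommRing A] [Algebra k A] (e : ℕ)
    (j : Fin e) (f : A[X]) :
    auxPhi k A e (Pi.single j f) = X ^ (j : ℕ) * expand A e f := by
  simp only [auxPhi, LinearMap.coe_mk, AddHom.coe_mk]
  rw [Finset.sum_eq_single j]
  · simp
  · intro i _ hij
    simp [Pi.single_eq_of_ne hij]
  · simp

theorem auxPhi_bij {k A : Type*} [Field k] [CommRing A] [Algebra k A] (e : ℕ) (he : 0 < e) :
    Function.Bijective (auxPhi k A e) := by
  constructor
  · intro F G h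
    ext j n
    rw [← auxPhi_coeff (k := k), ← auxPhi_coeff (k := k), h]
  · rw [← LinearMap.range_eq_top, eq_top_iff]
    rintro f -
    induction f using Polynomial.induction_on' with
    | add p q hp hq => exact add_mem hp hq
    | monomial n a =>
      refine ⟨Pi.single ⟨n % e, Nat.mod_lt _ he⟩ (monomial (n / e) a), ?_⟩
      rw [auxPhi_single, expand_monomial, ← monomial_one_right_eq_X_pow, monomial_mul_monomial,
        one_mul]
      have h : n % e + n / e * e = n := by rw [mul_comm]; exact Nat.mod_add_div n e
      simp only [h]

theorem aux_split {k A : Type*} [Field k] [CommRing A] [Algebra k A] [Module.Finite k A]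
    (e p : ℕ) (he : 0 < e) (s : Fin e → ℕ) (hs : ∀ (j : Fin e) n, p ≤ e * n + j ↔ s j ≤ n)
    (g : A[X]) :
    Module.finrank k (A[X] ⧸ Ideal.span {(X : A[X]) ^ p, expand A e g}) =
      ∑ j, Module.finrank k (A[X] ⧸ Ideal.span {(X : A[X]) ^ (s j), g}) := by
  let φ : (Fin e → A[X]) ≃ₗ[k] A[X] := LinearEquiv.ofBijective (auxPhi k A e) (auxPhi_bij e he)
  have hφ : ∀ F, φ F = auxPhi k A e F := fun F => rfl
  let J : Fin e → Submodule k A[X] := fun j =>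
    (Ideal.span {(X : A[X]) ^ (s j), g}).restrictScalars k
  let I : Submodule k A[X] := (Ideal.span {(X : A[X]) ^ p, expand A e g}).restrictScalars k
  have key : Submodule.map (φ : (Fin e → A[X]) →ₗ[k] A[X]) (Submodule.pi Set.univ J) = I := by
    apply le_antisymm
    · rintro _ ⟨F, hF, rfl⟩
      change auxPhi k A e F ∈ Ideal.span {(X : A[X]) ^ p, expand A e g}
      simp only [auxPhi, LinearMap.coe_mk, AddHom.coe_mk]
      refine Ideal.sum_mem _ fun i _ => ?_
      have hi : F i ∈ Ideal.span {(X : A[X]) ^ (s i), g} := hF i (Set.mem_univ i)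
      obtain ⟨a, b, hab⟩ := Ideal.mem_span_pair.1 hi
      have h1 : p ≤ e * s i + i := (hs i (s i)).2 le_rfl
      obtain ⟨c, hc⟩ := Nat.exists_eq_add_of_le h1
      rw [Ideal.mem_span_pair]
      refine ⟨X ^ c * expand A e a, X ^ (i : ℕ) * expand A e b, ?_⟩
      rw [← hab]
      simp only [map_add, map_mul, map_pow, expand_X]
      rw [← pow_mul]
      have : (X : A[X]) ^ (i : ℕ) * X ^ (e * s i) = X ^ c * X ^ p := by
        rw [← pow_add, ← pow_add]; congr 1; omega
      linear_combination (-(expand A e a)) * this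
    · intro f hf
      obtain ⟨a, b, hab⟩ := Ideal.mem_span_pair.1 (show f ∈ Ideal.span _ from hf)
      obtain ⟨F, rfl⟩ := φ.surjective a
      obtain ⟨G, rfl⟩ := φ.surjective b
      rw [← hab]
      refine add_mem ?_ ?_
      · rw [hφ]
        simp only [auxPhi, LinearMap.coe_mk, AddHom.coe_mk, Finset.sum_mul]
        refine Submodule.sum_mem _ fun i _ => ?_
        refine ⟨Pi.single ⟨(p + i) % e, Nat.mod_lt _ he⟩ (X ^ ((p + i) / e) * F i), ?_, ?_⟩
        · intro j _
          by_cases hj : j = ⟨(p + i) % e, Nat.mod_lt _ he⟩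
          · subst hj
            rw [Pi.single_eq_same]
            refine Ideal.mul_mem_right _ _ ?_
            refine Ideal.mem_of_dvd _ (pow_dvd_pow X ((hs _ _).1 ?_))
              (Ideal.subset_span (Set.mem_insert _ _))
            simp only
            rw [Nat.div_add_mod]; omega
          · rw [Pi.single_eq_of_ne hj]; exact zero_mem _
        · change auxPhi k A e _ = _
          rw [auxPhi_single]
          simp only [map_mul, map_pow, expand_X]
          rw [← pow_mul, ← mul_assoc, ← pow_add, Nat.mod_add_div]
          ring
      · refine ⟨fun i => G i * g, ?_, ?_⟩
        · intro j _
          exact Ideal.mul_mem_left _ _ (Ideal.subset_span (by simp))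
        · change auxPhi k A e _ = _
          rw [hφ]
          simp only [auxPhi, LinearMap.coe_mk, AddHom.coe_mk, Finset.sum_mul, map_mul]
          exact Finset.sum_congr rfl fun i _ => by ring
  have E : (∀ j, (A[X] ⧸ J j)) ≃ₗ[k] (A[X] ⧸ I) :=
    (Submodule.quotientPi J).symm.trans (Submodule.Quotient.equiv _ _ φ key)
  have hfin : ∀ j, Module.Finite k (A[X] ⧸ J j) := fun j =>
    aux_finite (k := k) (X ^ (s j)) (monic_X_pow _) (Ideal.span {(X : A[X]) ^ (s j), g})
      (Ideal.subset_span (by simp))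
  have := E.finrank_eq
  rw [Module.finrank_pi_fintype] at this
  exact this.symm
end HKaux

section HKaux2
open Polynomial

theorem aux_symm {k A : Type*} [Field k] [CommRing A] [Algebra k A] (t : A) (a b : ℕ) :
    Module.finrank k (A[X] ⧸ Ideal.span {(X : A[X]) ^ a, (X + C t) ^ b}) =
      Module.finrank k (A[X] ⧸ Ideal.span {(X : A[X]) ^ b, (X + C t) ^ a}) := by
  let φ : A[X] →ₐ[k] A[X] := (Polynomial.aeval (R := A) (-(X + C t) : A[X])).restrictScalars k
  have hX : φ X = -(X + C t) := by simp [φ]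
  have hC : ∀ c, φ (C c) = C c := fun c => by simp [φ, Polynomial.algebraMap_eq]
  have hφφ : ∀ f, φ (φ f) = f := by
    intro f
    have : φ.comp φ = AlgHom.id k _ := by
      apply Polynomial.algHom_ext'
      · ext c; simp [hC]
      · simp [hX, hC]
    exact DFunLike.congr_fun this f
  have hs : Function.Surjective φ := fun f => ⟨φ f, hφφ f⟩
  have hi : RingHom.ker φ ≤ Ideal.span {(X : A[X]) ^ a, (X + C t) ^ b} := by
    intro f hf
    have : φ f = 0 := hf
    rw [← hφφ f, this, map_zero]; exact zero_mem _
  suffices h : (Ideal.span {(X : A[X]) ^ a, (X + C t) ^ b}).map φ =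
      Ideal.span {(X : A[X]) ^ b, (X + C t) ^ a} by
    obtain ⟨e⟩ := aux_finrank_quot φ hs _ _ hi h
    exact e.toLinearEquiv.finrank_eq
  · rw [Ideal.map_span, Set.image_pair]
    have h1 : φ (X ^ a) = (-1) ^ a * (X + C t) ^ a := by
      rw [map_pow, hX, neg_pow]
    have h2 : φ ((X + C t) ^ b) = (-1) ^ b * X ^ b := by
      rw [map_pow, map_add, hX, hC, ← neg_pow]; congr 1; ring
    rw [h1, h2, Set.pair_comm, Ideal.span_insert, Ideal.span_insert]
    congr 1
    · rw [mul_comm]; exact Ideal.span_singleton_mul_right_unit ((isUnit_one.neg).pow b) _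
    · rw [mul_comm]; exact Ideal.span_singleton_mul_right_unit ((isUnit_one.neg).pow a) _

theorem aux_unit {k A : Type*} [Field k] [CommRing A] [Algebra k A] (p : ℕ) [CharP k p]
    (n : ℕ) (h0 : 0 < n) (hn : n < p) : IsUnit (n : A) := by
  have : (n : k) ≠ 0 := by
    rw [Ne, CharP.cast_eq_zero_iff k p]
    exact fun h => absurd (Nat.le_of_dvd h0 h) (by omega)
  have h := (isUnit_iff_ne_zero.2 this).map (algebraMap k A)
  simpa using h

theorem aux_integ {k A : Type*} [Field k] [CommRing A] [Algebra k A] (p m : ℕ) [CharP k p]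
    (hp : 2 * m < p) (g : A[X]) (hg : g.degree < m) :
    ∃ G : A[X], G.degree < m ∧ derivative (X ^ (m + 1) * G) = X ^ m * g := by
  have hu : ∀ i, ∃ c : A, i < m → c * ((m + 1 + i : ℕ) : A) = 1 := by
    intro i
    by_cases hi : i < m
    · obtain ⟨c, hc⟩ := (aux_unit (k := k) (A := A) p (m + 1 + i) (by omega)
        (by omega)).exists_left_inv
      exact ⟨c, fun _ => hc⟩
    · exact ⟨0, fun h => absurd h hi⟩
  choose c hc using hu
  refine ⟨∑ i ∈ Finset.range m, monomial i (g.coeff i * c i), ?_, ?_⟩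
  · rw [Polynomial.degree_lt_iff_coeff_zero]
    intro j hj
    simp only [finsetSum_coeff, coeff_monomial]
    refine Finset.sum_eq_zero fun i hi => if_neg ?_
    have := Finset.mem_range.1 hi
    omega
  · have hgs : g = ∑ i ∈ Finset.range m, monomial i (g.coeff i) := by
      ext j
      simp only [finsetSum_coeff, coeff_monomial]
      by_cases hj : j < m
      · rw [Finset.sum_eq_single j] <;> simp +contextual [hj]
      · rw [(Polynomial.degree_lt_iff_coeff_zero _ _).1 hg j (by omega)]
        refine (Finset.sum_eq_zero fun i hi => if_neg ?_).symm
        have := Finset.mem_range.1 hi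
        omega
    conv_rhs => rw [hgs]
    rw [Finset.mul_sum, Finset.mul_sum, derivative_sum]
    refine Finset.sum_congr rfl fun i hi => ?_
    have h := hc i (Finset.mem_range.1 hi)
    rw [← monomial_one_right_eq_X_pow, ← monomial_one_right_eq_X_pow, monomial_mul_monomial,
      monomial_mul_monomial, derivative_monomial, one_mul, one_mul, mul_assoc, h, mul_one]
    have h' : m + 1 + i - 1 = m + i := by omega
    rw [h']

theorem aux_const {k A : Type*} [Field k] [CommRing A] [Algebra k A] (p : ℕ) [CharP k p]
    (F : A[X]) (hF : F.degree < p) (h : derivative F = 0) : ∃ c, F = C c := by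
  refine ⟨F.coeff 0, ?_⟩
  ext n
  rcases n with _ | n
  · simp
  · rw [coeff_C_succ]
    by_cases hn : n + 1 < p
    · have h1 : F.coeff (n + 1) * ((n : A) + 1) = 0 := by
        rw [← coeff_derivative, h, coeff_zero]
      have h2 := aux_unit (k := k) (A := A) p (n + 1) (by omega) hn
      push_cast at h2
      exact (h2.mul_left_eq_zero).1 h1
    · exact (Polynomial.degree_lt_iff_coeff_zero _ _).1 hF _ (by omega)

theorem aux_deriv_ker {k A : Type*} [Field k] [CommRing A] [Algebra k A] (p m : ℕ) [CharP k p]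
    (hp : 2 * m < p) (t : A) (f : A[X])
    (hf : derivative f ∈ Ideal.span {(X : A[X]) ^ m, (X + C t) ^ m}) :
    ∃ c, f - C c ∈ Ideal.span {(X : A[X]) ^ (m + 1), (X + C t) ^ (m + 1)} := by
  nontriviality A
  -- reduction
  wlog hdeg : f.degree < (m + 1 : ℕ) generalizing f
  · have hm : (X ^ (m + 1) : A[X]).Monic := monic_X_pow _
    have e1 := modByMonic_add_div f (X ^ (m + 1) : A[X])
    set r := f %ₘ (X ^ (m + 1)) with hr
    set w := f /ₘ (X ^ (m + 1)) with hw
    have hd : r.degree < (m + 1 : ℕ) := by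
      have := degree_modByMonic_lt f hm
      rwa [degree_X_pow] at this
    have hder : derivative r ∈ Ideal.span {(X : A[X]) ^ m, (X + C t) ^ m} := by
      have e2 : derivative r = derivative f -
          X ^ m * (((m + 1 : ℕ) : A[X]) * w + X * derivative w) := by
        rw [← e1]
        simp only [derivative_add, derivative_mul, derivative_X_pow]
        simp only [Nat.add_sub_cancel, map_natCast]
        ring
      rw [e2]
      exact sub_mem hf (Ideal.mul_mem_right _ _ (Ideal.subset_span (by simp)))
    obtain ⟨c, hc⟩ := this r hder hd
    refine ⟨c, ?_⟩
    have : f - C c = (r - C c) + X ^ (m + 1) * w := by rw [← e1]; ring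
    rw [this]
    exact add_mem hc (Ideal.mul_mem_right _ _ (Ideal.subset_span (by simp)))
  obtain ⟨g', h', hgh⟩ := Ideal.mem_span_pair.1 hf
  have hv : ((X + C t) ^ m : A[X]).Monic := (monic_X_add_C t).pow m
  have hvd : ((X + C t) ^ m : A[X]).degree = m := by
    rw [degree_eq_natDegree hv.ne_zero, (monic_X_add_C t).natDegree_pow, natDegree_X_add_C, mul_one]
  have e1 := modByMonic_add_div g' ((X + C t) ^ m : A[X])
  set g := g' %ₘ ((X + C t) ^ m) with hg
  set w := g' /ₘ ((X + C t) ^ m) with hw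
  have hgd : g.degree < m := by
    have := degree_modByMonic_lt g' hv
    rwa [hvd] at this
  set h := h' + X ^ m * w with hh
  have e2 : derivative f = X ^ m * g + (X + C t) ^ m * h := by
    rw [← hgh, ← e1, hh]; ring
  have hfd : (derivative f).degree < m := by
    rw [Polynomial.degree_lt_iff_coeff_zero]
    intro j hj
    rw [coeff_derivative, (Polynomial.degree_lt_iff_coeff_zero _ _).1 hdeg _ (by omega), zero_mul]
  have hXg : (X ^ m * g).degree < ((m + m : ℕ) : WithBot ℕ) := by
    rw [Polynomial.degree_lt_iff_coeff_zero]
    intro j hj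
    rw [coeff_X_pow_mul', if_pos (by omega)]
    exact (Polynomial.degree_lt_iff_coeff_zero _ _).1 hgd _ (by omega)
  have hhd : h.degree < m := by
    have h1 : ((X + C t) ^ m * h).degree < ((m + m : ℕ) : WithBot ℕ) := by
      have : (X + C t) ^ m * h = derivative f - X ^ m * g := by rw [e2]; ring
      rw [this]
      refine lt_of_le_of_lt (degree_sub_le _ _) (max_lt (hfd.trans_le ?_) hXg)
      exact_mod_cast Nat.le_add_left _ _
    by_contra hcon
    push Not at hcon
    rw [hv.degree_mul_comm, hv.degree_mul, hvd] at h1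
    push_cast at h1
    exact absurd h1 (not_lt.2 (by gcongr))
  obtain ⟨G, hGd, hG⟩ := aux_integ (k := k) p m hp g hgd
  have hshift : ∀ f : A[X], ∀ s : A, (f.comp (X + C s)).degree = f.degree := by
    intro f s
    rw [← taylor_apply, degree_taylor]
  obtain ⟨H, hHd, hH⟩ := aux_integ (k := k) p m hp (h.comp (X + C (-t)))
    (by rw [hshift]; exact hhd)
  have hH2 : derivative ((X + C t) ^ (m + 1) * H.comp (X + C t)) = (X + C t) ^ m * h := by
    have := derivative_comp (X ^ (m + 1) * H) (X + C t)
    rw [hH] at this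
    simp only [mul_comp, pow_comp, X_comp, comp_assoc, add_comp, C_comp, derivative_add,
      derivative_X, derivative_C, add_zero, one_mul] at this
    rw [this]
    congr 1
    have : (X + C t + C (-t) : A[X]) = X := by simp
    rw [this, comp_X]
  have hd1 : (X ^ (m + 1) * G).degree < (p : WithBot ℕ) := by
    rw [Polynomial.degree_lt_iff_coeff_zero]
    intro j hj
    rw [coeff_X_pow_mul', if_pos (by omega)]
    exact (Polynomial.degree_lt_iff_coeff_zero _ _).1 hGd _ (by omega)
  have hd1' : (X ^ (m + 1) * H).degree < (p : WithBot ℕ) := by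
    rw [Polynomial.degree_lt_iff_coeff_zero]
    intro j hj
    rw [coeff_X_pow_mul', if_pos (by omega)]
    exact (Polynomial.degree_lt_iff_coeff_zero _ _).1 hHd _ (by omega)
  have hd2 : ((X + C t) ^ (m + 1) * H.comp (X + C t)).degree < (p : WithBot ℕ) := by
    rw [← hshift _ t] at hd1'
    simpa only [mul_comp, pow_comp, X_comp] using hd1'
  have hd3 : f.degree < (p : WithBot ℕ) := by
    rcases Nat.eq_zero_or_pos m with h0 | h0
    · refine hdeg.trans_le ?_
      exact_mod_cast (by omega : m + 1 ≤ p)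
    · refine hdeg.trans_le ?_
      exact_mod_cast (by omega : m + 1 ≤ p)
  obtain ⟨c, hc⟩ := aux_const (k := k) p
    (f - X ^ (m + 1) * G - (X + C t) ^ (m + 1) * H.comp (X + C t))
    (lt_of_le_of_lt (degree_sub_le _ _) (max_lt (lt_of_le_of_lt (degree_sub_le _ _)
      (max_lt hd3 hd1)) hd2))
    (by rw [derivative_sub, derivative_sub, hG, hH2, e2]; ring)
  refine ⟨c, Ideal.mem_span_pair.2 ⟨G, H.comp (X + C t), ?_⟩⟩
  rw [← hc]; ring

theorem aux_DD {k A : Type*} [Field k] [CommRing A] [Algebra k A] [Module.Finite k A]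
    (p m : ℕ) [CharP k p] (hp : 2 * m < p) (t : A) :
    Module.finrank k (A[X] ⧸ Ideal.span {(X : A[X]) ^ (m + 1), (X + C t) ^ (m + 1)}) ≤
      Module.finrank k (A[X] ⧸ Ideal.span {(X : A[X]) ^ m, (X + C t) ^ m}) +
        Module.finrank k A := by
  have F1 : Module.Finite k (A[X] ⧸ Ideal.span {(X : A[X]) ^ (m + 1), (X + C t) ^ (m + 1)}) :=
    aux_finite (X ^ (m + 1)) (monic_X_pow _) _ (Ideal.subset_span (by simp))
  have F2 : Module.Finite k (A[X] ⧸ Ideal.span {(X : A[X]) ^ m, (X + C t) ^ m}) :=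
    aux_finite (X ^ m) (monic_X_pow _) _ (Ideal.subset_span (by simp))
  let δ : A[X] →ₗ[k] A[X] := (derivative (R := A)).restrictScalars k
  let I1 : Submodule k A[X] :=
    (Ideal.span {(X : A[X]) ^ (m + 1), (X + C t) ^ (m + 1)}).restrictScalars k
  let I2 : Submodule k A[X] := (Ideal.span {(X : A[X]) ^ m, (X + C t) ^ m}).restrictScalars k
  have hle : I1 ≤ I2.comap δ := by
    intro f hf
    obtain ⟨a, b, rfl⟩ := Ideal.mem_span_pair.1 (show f ∈ Ideal.span _ from hf)
    change derivative _ ∈ Ideal.span _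
    rw [Ideal.mem_span_pair]
    refine ⟨derivative a * X + a * ((m + 1 : ℕ) : A[X]),
      derivative b * (X + C t) + b * ((m + 1 : ℕ) : A[X]), ?_⟩
    simp only [derivative_add, derivative_mul, derivative_pow, derivative_X, derivative_C,
      Nat.add_sub_cancel, map_natCast, add_zero, mul_one]
    ring
  let D : (A[X] ⧸ I1) →ₗ[k] (A[X] ⧸ I2) := Submodule.mapQ I1 I2 δ hle
  have : Module.Finite k (A[X] ⧸ I1) := F1
  have : Module.Finite k (A[X] ⧸ I2) := F2
  have h1 := LinearMap.finrank_range_add_finrank_ker D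
  have h2 : Module.finrank k (LinearMap.range D) ≤ Module.finrank k (A[X] ⧸ I2) :=
    Submodule.finrank_le _
  let ι : A →ₗ[k] (A[X] ⧸ I1) := I1.mkQ.comp (CAlgHom (R := k) (A := A)).toLinearMap
  have h3 : LinearMap.ker D ≤ LinearMap.range ι := by
    intro x hx
    obtain ⟨f, rfl⟩ := I1.mkQ_surjective x
    have hx' : I2.mkQ (δ f) = 0 := hx
    have hmem : δ f ∈ I2 := by
      simpa using hx'
    obtain ⟨c, hc⟩ := aux_deriv_ker (k := k) p m hp t f hmem
    refine ⟨c, ?_⟩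
    have : I1.mkQ (f - C c) = 0 := by
      rw [Submodule.mkQ_apply, Submodule.Quotient.mk_eq_zero]; exact hc
    rw [map_sub, sub_eq_zero] at this
    exact this.symm
  have h4 : Module.finrank k (LinearMap.ker D) ≤ Module.finrank k A :=
    (Submodule.finrank_mono h3).trans (LinearMap.finrank_range_le ι)
  change Module.finrank k (A[X] ⧸ I1) ≤ Module.finrank k (A[X] ⧸ I2) + _
  omega
end HKaux2

open MvPolynomial

section HKaux3

theorem aux_conc (L l : ℕ → ℕ) (h : ∀ n, L (n + 1) = L n + l n) (hl : Antitone l)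
    (m s r : ℕ) (hs : 1 ≤ s) (hsm : s ≤ m) (hr : 3 * s + r = 2 * m + 1) :
    2 * L m + L 1 ≤ 3 * L s + r * l s := by
  have h1 : ∀ a n, L (a + n) ≤ L a + n * l a := by
    intro a n
    induction n with
    | zero => simp
    | succ n ih =>
      rw [← add_assoc, h]
      have := hl (Nat.le_add_right a n)
      nlinarith
  have h2 : ∀ a n j, L a + n * l (a + n + j) ≤ L (a + n) := by
    intro a n
    induction n with
    | zero => simp
    | succ n ih =>
      intro j
      have e := ih (1 + j)
      rw [← add_assoc a n 1, h]
      have e2 : a + n + 1 + j = a + n + (1 + j) := by ring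
      rw [e2]
      have := hl (Nat.le_add_right (a + n) (1 + j))
      nlinarith
  obtain ⟨n, rfl⟩ := Nat.exists_eq_add_of_le hs
  obtain ⟨n2, rfl⟩ := Nat.exists_eq_add_of_le hsm
  have e1 := h1 (1 + n) n2
  have e2 := h2 1 n 0
  simp only [add_zero] at e2
  have e3 : n + r = 2 * n2 := by omega
  have e4 : n * l (1 + n) + r * l (1 + n) = 2 * (n2 * l (1 + n)) := by
    rw [← add_mul, e3]; ring
  omega

theorem aux_L {k A : Type*} [Field k] [CommRing A] [Algebra k A] [Module.Finite k A] (t : A) :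
    ∃ l : ℕ → ℕ, Antitone l ∧ ∀ n, Module.finrank k (A ⧸ Ideal.span {t ^ (n + 1)}) =
      Module.finrank k (A ⧸ Ideal.span {t ^ n}) + l n := by
  let T : A →ₗ[k] A := LinearMap.mulLeft k t
  let W : ℕ → Submodule k A := fun n => (Ideal.span {t ^ n}).restrictScalars k
  have hW : ∀ n, Module.finrank k (A ⧸ Ideal.span {t ^ n}) + Module.finrank k (W n) =
      Module.finrank k A := fun n => Submodule.finrank_quotient_add_finrank (W n)
  have hanti : Antitone W := by
    intro a b hab
    change Ideal.span {t ^ b} ≤ Ideal.span {t ^ a}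
    rw [Ideal.span_singleton_le_span_singleton]
    exact pow_dvd_pow t hab
  have hmap : ∀ n, (W n).map T = W (n + 1) := by
    intro n
    ext x
    constructor
    · rintro ⟨y, hy, rfl⟩
      obtain ⟨c, rfl⟩ := Ideal.mem_span_singleton'.1 (show y ∈ Ideal.span {t ^ n} from hy)
      refine Ideal.mem_span_singleton'.2 ⟨c, ?_⟩
      simp only [T, LinearMap.mulLeft_apply]; ring
    · intro hx
      obtain ⟨c, rfl⟩ := Ideal.mem_span_singleton'.1
        (show x ∈ Ideal.span {t ^ (n + 1)} from hx)
      refine ⟨c * t ^ n, Ideal.mem_span_singleton'.2 ⟨c, rfl⟩, ?_⟩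
      simp only [T, LinearMap.mulLeft_apply]; ring
  refine ⟨fun n => Module.finrank k (LinearMap.ker T ⊓ W n : Submodule k A), ?_, ?_⟩
  · intro a b hab
    exact Submodule.finrank_mono (inf_le_inf_left _ (hanti hab))
  · intro n
    have h1 := LinearMap.finrank_range_add_finrank_ker (T.domRestrict (W n))
    have h2 : LinearMap.range (T.domRestrict (W n)) = W (n + 1) := by
      rw [LinearMap.range_domRestrict, hmap]
    have h3 : Module.finrank k (LinearMap.ker (T.domRestrict (W n))) =
        Module.finrank k (LinearMap.ker T ⊓ W n : Submodule k A) := by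
      rw [LinearMap.ker_domRestrict, inf_comm]
      exact (Submodule.equivSubtypeMap _ _).finrank_eq.trans (by rw [Submodule.map_comap_subtype])
    rw [h2, h3] at h1
    have := hW n
    have := hW (n + 1)
    change _ = _ + Module.finrank k (LinearMap.ker T ⊓ W n : Submodule k A)
    omega

end HKaux3

section HKaux4

/-- Frobenius power of the maximal ideal -/
noncomputable abbrev auxId (k : Type*) [Field k] (n p : ℕ) : Ideal (MvPolynomial (Fin n) k) :=
  Ideal.span (Set.range (fun i : Fin n => (X i : MvPolynomial (Fin n) k) ^ p ^ 1))

/-- truncated polynomial algebra -/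
def auxA (k : Type*) [Field k] (n p : ℕ) : Type _ := MvPolynomial (Fin n) k ⧸ auxId k n p

noncomputable instance auxA.ring (k : Type*) [Field k] (n p : ℕ) : CommRing (auxA k n p) :=
  inferInstanceAs (CommRing (MvPolynomial (Fin n) k ⧸ auxId k n p))

noncomputable instance auxA.alg (k : Type*) [Field k] (n p : ℕ) : Algebra k (auxA k n p) :=
  inferInstanceAs (Algebra k (MvPolynomial (Fin n) k ⧸ auxId k n p))

/-- projection -/
noncomputable def auxMk (k : Type*) [Field k] (n p : ℕ) :
    MvPolynomial (Fin n) k →ₐ[k] auxA k n p :=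
  Ideal.Quotient.mkₐ k (auxId k n p)

theorem auxMk_surj (k : Type*) [Field k] (n p : ℕ) : Function.Surjective (auxMk k n p) :=
  Ideal.Quotient.mkₐ_surjective k _

theorem auxMk_zero (k : Type*) [Field k] (n p : ℕ) (x : MvPolynomial (Fin n) k) :
    auxMk k n p x = 0 ↔ x ∈ auxId k n p :=
  Ideal.Quotient.eq_zero_iff_mem

theorem auxMk_lift {k B : Type*} [Field k] [CommRing B] [Algebra k B] (n p : ℕ)
    (f : MvPolynomial (Fin n) k →ₐ[k] B) (hf : ∀ a ∈ auxId k n p, f a = 0) :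
    ∃ g : auxA k n p →ₐ[k] B, ∀ x, g (auxMk k n p x) = f x :=
  ⟨Ideal.Quotient.liftₐ (auxId k n p) f hf, fun _ => rfl⟩

noncomputable def auxF (k : Type*) [Field k] (n p : ℕ) :
    MvPolynomial (Fin (n + 1)) k →ₐ[k] Polynomial (auxA k n p) :=
  MvPolynomial.aeval (Fin.lastCases Polynomial.X
    (fun i => Polynomial.C (auxMk k n p (X i))))

theorem auxF_last (k : Type*) [Field k] (n p : ℕ) :
    auxF k n p (X (Fin.last n)) = Polynomial.X := by simp [auxF]

theorem auxF_cast (k : Type*) [Field k] (n p : ℕ) (i : Fin n) :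
    auxF k n p (X i.castSucc) = Polynomial.C (auxMk k n p (X i)) := by
  simp [auxF]

theorem auxF_rename (k : Type*) [Field k] (n p : ℕ) (f : MvPolynomial (Fin n) k) :
    auxF k n p (rename Fin.castSucc f) = Polynomial.C (auxMk k n p f) := by
  have : (auxF k n p).comp (rename Fin.castSucc) =
      (Polynomial.CAlgHom).comp (auxMk k n p) := by
    apply MvPolynomial.algHom_ext
    intro i
    simp [auxF_cast]
  exact DFunLike.congr_fun this f

theorem auxF_surj (k : Type*) [Field k] (n p : ℕ) : Function.Surjective (auxF k n p) := by
  rw [← AlgHom.range_eq_top, eq_top_iff]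
  rintro f -
  induction f using Polynomial.induction_on' with
  | add p q hp hq => exact add_mem hp hq
  | monomial j a =>
    obtain ⟨b, rfl⟩ := auxMk_surj k n p a
    refine ⟨rename Fin.castSucc b * X (Fin.last n) ^ j, ?_⟩
    change auxF k n p _ = _
    rw [map_mul, map_pow, auxF_rename, auxF_last, Polynomial.C_mul_X_pow_eq_monomial]

theorem auxF_ker (k : Type*) [Field k] (n p : ℕ) :
    RingHom.ker (auxF k n p) ≤ auxId k (n + 1) p := by
  let f0 : MvPolynomial (Fin n) k →ₐ[k] auxA k (n + 1) p :=
    (auxMk k (n + 1) p).comp (rename Fin.castSucc)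
  have h0 : ∀ a ∈ auxId k n p, f0 a = 0 := by
    intro a ha
    have : auxId k n p ≤ RingHom.ker f0 := by
      rw [Ideal.span_le]
      rintro _ ⟨i, rfl⟩
      change f0 _ = 0
      simp only [f0, AlgHom.comp_apply, map_pow, rename_X]
      rw [← map_pow]
      exact (auxMk_zero _ _ _ _).2 (Ideal.subset_span ⟨i.castSucc, by simp⟩)
    exact this ha
  obtain ⟨f1, hf1⟩ := auxMk_lift n p f0 h0
  let f2 : Polynomial (auxA k n p) →ₐ[k] auxA k (n + 1) p :=
    Polynomial.aevalTower f1 (auxMk k (n + 1) p (X (Fin.last n)))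
  have hcomp : f2.comp (auxF k n p) = auxMk k (n + 1) p := by
    apply MvPolynomial.algHom_ext
    intro i
    refine Fin.lastCases ?_ (fun i => ?_) i
    · simp [auxF_last, f2]
    · simp [auxF_cast, f2, hf1, f0]
  intro x hx
  have hx' : auxF k n p x = 0 := hx
  have := DFunLike.congr_fun hcomp x
  rw [AlgHom.comp_apply, hx', map_zero] at this
  exact (auxMk_zero _ _ _ _).1 this.symm

theorem aux_base (k : Type*) [Field k] (n p : ℕ)
    (S : Set (MvPolynomial (Fin (n + 1)) k)) :
    Nonempty ((MvPolynomial (Fin (n + 1)) k ⧸ Ideal.span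
        (Set.range (fun i : Fin (n + 1) => (X i : MvPolynomial (Fin (n + 1)) k) ^ p ^ 1) ∪ S))
      ≃ₐ[k] (Polynomial (auxA k n p) ⧸
        (Ideal.span (insert ((Polynomial.X : Polynomial (auxA k n p)) ^ p) (auxF k n p '' S)) :
          Ideal (Polynomial (auxA k n p))))) := by
  refine aux_finrank_quot (auxF k n p) (auxF_surj k n p) _ _
    ((auxF_ker k n p).trans (Ideal.span_mono Set.subset_union_left)) ?_
  rw [Ideal.map_span, Set.image_union]
  apply le_antisymm
  · rw [Ideal.span_le]
    rintro x (⟨_, ⟨i, rfl⟩, rfl⟩ | hx)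
    · simp only [pow_one, map_pow]
      refine Fin.lastCases ?_ (fun i => ?_) i
      · rw [auxF_last]
        exact Ideal.subset_span (Set.mem_insert _ _)
      · rw [auxF_cast, ← Polynomial.C_pow, ← map_pow]
        have : auxMk k n p (X i ^ p) = 0 :=
          (auxMk_zero _ _ _ _).2 (Ideal.subset_span ⟨i, by simp⟩)
        rw [this, Polynomial.C_0]
        exact zero_mem _
    · exact Ideal.subset_span (Set.mem_insert_of_mem _ hx)
  · rw [Ideal.span_le]
    rintro x (rfl | hx)
    · refine Ideal.subset_span (Or.inl ⟨X (Fin.last n) ^ p, ⟨Fin.last n, by simp⟩, ?_⟩)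
      rw [map_pow, auxF_last]
    · exact Ideal.subset_span (Or.inr hx)

theorem aux_dim (k : Type*) [Field k] (p : ℕ) (hp : 0 < p) (n : ℕ) :
    Module.Finite k (auxA k n p) ∧ Module.finrank k (auxA k n p) ≤ p ^ n := by
  induction n with
  | zero =>
    let e := MvPolynomial.isEmptyAlgEquiv k (Fin 0)
    have hF : Module.Finite k (MvPolynomial (Fin 0) k) := Module.Finite.equiv e.symm.toLinearEquiv
    have h1 : Module.finrank k (MvPolynomial (Fin 0) k) = 1 := by
      rw [e.toLinearEquiv.finrank_eq]; simp
    refine ⟨Module.Finite.of_surjective (auxMk k 0 p).toLinearMap (auxMk_surj k 0 p), ?_⟩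
    have := LinearMap.finrank_le_finrank_of_surjective
      (f := (auxMk k 0 p).toLinearMap) (auxMk_surj k 0 p)
    rw [h1] at this
    simpa using this
  | succ n ih =>
    obtain ⟨hF, hr⟩ := ih
    obtain ⟨e⟩ := aux_base k n p ∅
    have hset : (insert ((Polynomial.X : Polynomial (auxA k n p)) ^ p) (auxF k n p '' ∅)) =
        {Polynomial.X ^ p, Polynomial.expand _ p (Polynomial.X +
          Polynomial.C 0)} := by
      simp
    rw [hset, Set.union_empty] at e
    have e' : auxA k (n + 1) p ≃ₗ[k] _ := e.toLinearEquiv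
    have hF2 : Module.Finite k (Polynomial (auxA k n p) ⧸
        (Ideal.span {(Polynomial.X : Polynomial (auxA k n p)) ^ p,
          Polynomial.expand _ p (Polynomial.X + Polynomial.C 0)} :
          Ideal (Polynomial (auxA k n p)))) :=
      aux_finite _ (Polynomial.monic_X_pow p) _ (Ideal.subset_span (by simp))
    refine ⟨Module.Finite.equiv e'.symm, ?_⟩
    rw [e'.finrank_eq, aux_split p p hp (fun _ => 1)]
    · simp only [aux_lin]
      rw [Finset.sum_const, Finset.card_univ, Fintype.card_fin, smul_eq_mul, pow_succ' p n]
      refine Nat.mul_le_mul_left p ?_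
      refine le_trans ?_ hr
      exact LinearMap.finrank_le_finrank_of_surjective
        (f := (Ideal.Quotient.mkₐ k _).toLinearMap) (Ideal.Quotient.mkₐ_surjective k _)
    · intro j n
      have := j.2
      constructor
      · intro h
        rcases n with _ | n
        · simp at h; omega
        · omega
      · intro h
        nlinarith

/-- the quadric -/
noncomputable abbrev auxQ (k : Type*) [Field k] (n : ℕ) : MvPolynomial (Fin n) k :=
  ∑ i : Fin n, X i ^ 2

theorem auxF_sum (k : Type*) [Field k] (n p : ℕ) :
    auxF k n p (∑ i : Fin n, (X (i.castSucc) : MvPolynomial (Fin (n + 1)) k) ^ 2) =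
      Polynomial.C (auxMk k n p (auxQ k n)) := by
  simp [auxF_cast]

theorem auxF_Q (k : Type*) [Field k] (n p : ℕ) :
    auxF k n p (∑ i : Fin (n + 1), X i ^ 2) = Polynomial.expand _ 2 (Polynomial.X +
      Polynomial.C (auxMk k n p (auxQ k n))) := by
  rw [Fin.sum_univ_castSucc, map_add, auxF_sum, map_pow, auxF_last, map_add,
    Polynomial.expand_X, Polynomial.expand_C, add_comm]

/-- quotient by a power of the quadric -/
noncomputable def auxL (k : Type*) [Field k] (n p a : ℕ) : ℕ :=
  Module.finrank k (auxA k n p ⧸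
    (Ideal.span {(auxMk k n p (auxQ k n)) ^ a} : Ideal (auxA k n p)))

theorem auxL_eq (k : Type*) [Field k] (n p a : ℕ) :
    auxL k n p a = HKfun k n p 1 (auxQ k n ^ a) := by
  obtain ⟨e⟩ := aux_finrank_quot (auxMk k n p) (auxMk_surj k n p)
    (Ideal.span (Set.range (fun i : Fin n => (X i : MvPolynomial (Fin n) k) ^ p ^ 1) ∪
      {auxQ k n ^ a}))
    (Ideal.span {(auxMk k n p (auxQ k n)) ^ a})
    (by
      intro x hx
      exact Ideal.span_mono Set.subset_union_left ((auxMk_zero _ _ _ _).1 hx))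
    (by
      rw [Ideal.span_union, Ideal.map_sup, Ideal.map_span _ {auxQ k n ^ a}, Set.image_singleton]
      have : Ideal.map (auxMk k n p) (auxId k n p) = ⊥ := by
        rw [Ideal.map_eq_bot_iff_le_ker]
        intro x hx
        exact (auxMk_zero _ _ _ _).2 hx
      rw [this, bot_sup_eq, map_pow])
  exact e.toLinearEquiv.finrank_eq.symm

theorem aux_HK (k : Type*) [Field k] (n p : ℕ)
    (f : MvPolynomial (Fin (n + 1)) k) :
    HKfun k (n + 1) p 1 f = Module.finrank k (Polynomial (auxA k n p) ⧸
        (Ideal.span {(Polynomial.X : Polynomial (auxA k n p)) ^ p, auxF k n p f} :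
          Ideal (Polynomial (auxA k n p)))) := by
  obtain ⟨e⟩ := aux_base k n p {f}
  rw [Set.image_singleton] at e
  exact e.toLinearEquiv.finrank_eq

theorem aux_split2 {k A : Type*} [Field k] [CommRing A] [Algebra k A] [Module.Finite k A]
    (p m : ℕ) (hm : p = 2 * m + 1) (g : Polynomial A) :
    Module.finrank k (Polynomial A ⧸ Ideal.span {(Polynomial.X : Polynomial A) ^ p,
      Polynomial.expand A 2 g}) =
    Module.finrank k (Polynomial A ⧸ Ideal.span {(Polynomial.X : Polynomial A) ^ (m + 1), g}) +
    Module.finrank k (Polynomial A ⧸ Ideal.span {(Polynomial.X : Polynomial A) ^ m, g}) := by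
  subst hm
  rw [aux_split 2 (2 * m + 1) (by norm_num) ![m + 1, m]]
  · rw [Fin.sum_univ_two]; rfl
  · intro j n
    fin_cases j <;> simp <;> omega

end HKaux4

theorem HK1_A2_sub_A1 (p : ℕ) (hp : p.Prime) (hp3 : 3 < p)
    (k : Type*) [Field k] [CharP k p] (d : ℕ) (hd : 2 ≤ d) :
    HKfun k (d + 1) p 1
        ((∑ i : Fin d, (X (i.castSucc) : MvPolynomial (Fin (d + 1)) k) ^ 2) +
          X (Fin.last d) ^ 3) + p ^ (d - 1) ≥
      HKfun k (d + 1) p 1 (∑ i : Fin (d + 1), X i ^ 2) +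
        HKfun k d p 1 (∑ i : Fin d, X i ^ 2) := by
  have hp0 : 0 < p := hp.pos
  have hfin := (aux_dim k p hp0 d).1
  obtain ⟨m, hm⟩ : ∃ m, p = 2 * m + 1 := (hp.odd_of_ne_two (by omega))
  have hR1 : HKfun k d p 1 (∑ i : Fin d, X i ^ 2) = auxL k d p 1 := by
    rw [auxL_eq, pow_one]
  have hR : HKfun k (d + 1) p 1 (∑ i : Fin (d + 1), X i ^ 2) =
      auxL k d p (m + 1) + auxL k d p m := by
    rw [aux_HK k d p, auxF_Q, aux_split2 p m hm, aux_lin, aux_lin]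
    rfl
  obtain ⟨s, r, hsr, hr⟩ : ∃ s r, p = 3 * s + r ∧ (r = 1 ∨ r = 2) := by
    refine ⟨p / 3, p % 3, (Nat.div_add_mod p 3).symm, ?_⟩
    have h3 : ¬ 3 ∣ p := by
      intro h
      have := (Nat.prime_dvd_prime_iff_eq Nat.prime_three hp).1 h
      omega
    omega
  obtain ⟨l, hl, hL⟩ := aux_L (k := k) (auxMk k d p (auxQ k d))
  have hL' : ∀ n, auxL k d p (n + 1) = auxL k d p n + l n := hL
  have hS : HKfun k (d + 1) p 1
        ((∑ i : Fin d, (X (i.castSucc) : MvPolynomial (Fin (d + 1)) k) ^ 2) +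
          X (Fin.last d) ^ 3) = 3 * auxL k d p s + r * l s := by
    have hF : auxF k d p ((∑ i : Fin d, (X (i.castSucc) : MvPolynomial (Fin (d + 1)) k) ^ 2) +
          X (Fin.last d) ^ 3) = Polynomial.expand _ 3 (Polynomial.X +
      Polynomial.C (auxMk k d p (auxQ k d))) := by
      rw [map_add, auxF_sum, map_pow, auxF_last, map_add,
        Polynomial.expand_X, Polynomial.expand_C, add_comm]
    rw [aux_HK k d p, hF, aux_split 3 p (by norm_num) (fun j => if (j : ℕ) < r then s + 1 else s)]
    · simp only [aux_lin]
      change ∑ j : Fin 3, auxL k d p (if (j : ℕ) < r then s + 1 else s) = _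
      rcases hr with rfl | rfl
      · simp [Fin.sum_univ_three, hL']; ring
      · simp [Fin.sum_univ_three, hL']; ring
    · intro j n
      have := j.2
      rcases hr with rfl | rfl <;> fin_cases j <;> simp <;> omega
  have hconc := aux_conc (auxL k d p) l hL' hl m s r (by omega) (by omega) (by omega)
  have hstep : auxL k d p (m + 1) ≤ auxL k d p m + p ^ (d - 1) := by
    obtain ⟨n, rfl⟩ : ∃ n, d = n + 1 := ⟨d - 1, by omega⟩
    obtain ⟨hfn, hdim⟩ := aux_dim k p hp0 n
    generalize ht : auxMk k n p (auxQ k n) = t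
    have key : ∀ a, auxL k (n + 1) p a =
        Module.finrank k (Polynomial (auxA k n p) ⧸
          (Ideal.span {(Polynomial.X : Polynomial (auxA k n p)) ^ (m + 1),
            (Polynomial.X + Polynomial.C t) ^ a} : Ideal (Polynomial (auxA k n p)))) +
        Module.finrank k (Polynomial (auxA k n p) ⧸
          (Ideal.span {(Polynomial.X : Polynomial (auxA k n p)) ^ m,
            (Polynomial.X + Polynomial.C t) ^ a} : Ideal (Polynomial (auxA k n p)))) := by
      intro a
      rw [auxL_eq, aux_HK k n p, map_pow, auxF_Q, ← map_pow, aux_split2 p m hm, ht]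
    have h1 := aux_DD (k := k) p m (by omega) t
    have h2 := aux_symm (k := k) t (m + 1) m
    rw [key, key, Nat.add_sub_cancel]
    omega
  rw [hR1, hR, hS]
  omega
end

section
/- Let p > 3 be a prime, let k be a field of characteristic p, and let d ≥ 2. Then p · dim_k( k[y_0,…,y_{d−1}]/(y_0^p,…,y_{d−1}^p, y_0² + ⋯ + y_{d−1}²) ) ≥ dim_k( k[x_0,…,x_d]/(x_0^p,…,x_d^p, x_0² + ⋯ + x_{d−1}² + x_d³) ). That is, p·HK_1(R_{p,d−1}) ≥ HK_1(S_{p,d}). -/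
open MvPolynomial

lemma finrank_ker_pow_le {k V : Type*} [Field k] [AddCommGroup V] [Module k V]
    [FiniteDimensional k V] (T : V →ₗ[k] V) (n : ℕ) :
    Module.finrank k (LinearMap.ker (T ^ n)) ≤ n * Module.finrank k (LinearMap.ker T) := by
  induction n with
  | zero =>
    have : LinearMap.ker (T ^ 0) = ⊥ := by
      rw [pow_zero]; exact LinearMap.ker_id
    rw [this]; simp
  | succ n ih =>
    let S : LinearMap.ker (T ^ (n+1)) →ₗ[k] V := T.comp (Submodule.subtype _)
    have h := LinearMap.finrank_range_add_finrank_ker S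
    have h1 : Module.finrank k (LinearMap.range S) ≤ Module.finrank k (LinearMap.ker (T ^ n)) := by
      apply Submodule.finrank_mono
      rintro _ ⟨⟨x, hx⟩, rfl⟩
      rw [LinearMap.mem_ker] at hx ⊢
      rw [pow_succ] at hx
      exact hx
    have h2 : Module.finrank k (LinearMap.ker S) ≤ Module.finrank k (LinearMap.ker T) := by
      let F : LinearMap.ker S →ₗ[k] LinearMap.ker T :=
        LinearMap.codRestrict _ ((Submodule.subtype _).comp (Submodule.subtype _))
          (fun x => x.2)
      apply LinearMap.finrank_le_finrank_of_injective (f := F)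
      intro x y hxy
      have := congrArg Subtype.val hxy
      exact Subtype.ext (Subtype.ext this)
    rw [Nat.succ_mul]
    omega

lemma finrank_le_of_nilp {k Q : Type*} [Field k] [CommRing Q] [Algebra k Q]
    [FiniteDimensional k Q] (t : Q) (n : ℕ) (ht : t ^ n = 0) :
    Module.finrank k Q ≤ n * Module.finrank k (Q ⧸ Ideal.span {t}) := by
  let T := LinearMap.mulLeft k t
  have h := finrank_ker_pow_le T n
  have h0 : LinearMap.ker (T ^ n) = ⊤ := by
    have : T ^ n = 0 := by
      rw [LinearMap.pow_mulLeft, ht]; simp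
    rw [this]; exact LinearMap.ker_zero
  rw [h0, finrank_top] at h
  refine h.trans (Nat.mul_le_mul_left _ (le_of_eq ?_))
  have h1 := LinearMap.finrank_range_add_finrank_ker T
  have h2 := Submodule.finrank_quotient_add_finrank (LinearMap.range T)
  have h3 : LinearMap.range T = (Ideal.span {t}).restrictScalars k := by
    ext x
    simp only [LinearMap.mem_range, Submodule.restrictScalars_mem, Ideal.mem_span_singleton',
      T, LinearMap.mulLeft_apply, mul_comm]
  have h4 : Module.finrank k (Q ⧸ LinearMap.range T)
      = Module.finrank k (Q ⧸ Ideal.span {t}) := by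
    rw [h3]
    exact (Submodule.Quotient.restrictScalarsEquiv k (Ideal.span {t})).finrank_eq
  omega

/-- For every prime `p > 3` and `d ≥ 2`, `p · HK_1(R_{p,d−1}) ≥ HK_1(S_{p,d})`. -/
theorem HK1_A1_mul_p_ge_A2 (p : ℕ) (hp : p.Prime) (hp3 : 3 < p)
    (k : Type*) [Field k] [CharP k p] (d : ℕ) (hd : 2 ≤ d) :
    p * HKfun k d p 1 (∑ i : Fin d, X i ^ 2) ≥
      HKfun k (d + 1) p 1
        ((∑ i : Fin d, (X (i.castSucc) : MvPolynomial (Fin (d + 1)) k) ^ 2) +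
          X (Fin.last d) ^ 3) := by
  unfold HKfun
  set J : Ideal (MvPolynomial (Fin d) k) := Ideal.span
        (Set.range (fun i : Fin d => (X i : MvPolynomial (Fin d) k) ^ p ^ 1) ∪
          {∑ i : Fin d, X i ^ 2}) with hJ
  set I : Ideal (MvPolynomial (Fin (d+1)) k) := Ideal.span
        (Set.range (fun i : Fin (d+1) => (X i : MvPolynomial (Fin (d+1)) k) ^ p ^ 1) ∪
          {(∑ i : Fin d, (X (i.castSucc) : MvPolynomial (Fin (d + 1)) k) ^ 2) +
          X (Fin.last d) ^ 3}) with hI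
  have hp0 : p ≠ 0 := hp.ne_zero
  by_cases hfin : FiniteDimensional k (MvPolynomial (Fin (d+1)) k ⧸ I)
  swap
  · rw [Module.finrank_of_not_finite hfin]; exact Nat.zero_le _
  have hIpow : ∀ i, (Ideal.Quotient.mk I (X i)) ^ p = 0 := by
    intro i
    rw [← map_pow, Ideal.Quotient.eq_zero_iff_mem]
    exact Ideal.subset_span (Or.inl ⟨i, by simp⟩)
  have hIf : (∑ i : Fin d, (Ideal.Quotient.mk I (X i.castSucc)) ^ 2)
      + (Ideal.Quotient.mk I (X (Fin.last d))) ^ 3 = 0 := by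
    have : Ideal.Quotient.mk I ((∑ i : Fin d,
        (X (i.castSucc) : MvPolynomial (Fin (d + 1)) k) ^ 2) + X (Fin.last d) ^ 3) = 0 := by
      rw [Ideal.Quotient.eq_zero_iff_mem]
      exact Ideal.subset_span (Or.inr rfl)
    simpa using this
  have hJpow : ∀ i, (Ideal.Quotient.mk J (X i)) ^ p = 0 := by
    intro i
    rw [← map_pow, Ideal.Quotient.eq_zero_iff_mem]
    exact Ideal.subset_span (Or.inl ⟨i, by simp⟩)
  have hJf : (∑ i : Fin d, (Ideal.Quotient.mk J (X i)) ^ 2) = 0 := by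
    have : Ideal.Quotient.mk J (∑ i : Fin d, (X i : MvPolynomial (Fin d) k) ^ 2) = 0 := by
      rw [Ideal.Quotient.eq_zero_iff_mem]
      exact Ideal.subset_span (Or.inr rfl)
    simpa using this
  -- N is finite
  let π : MvPolynomial (Fin (d+1)) k →ₐ[k] (MvPolynomial (Fin d) k ⧸ J) :=
    aeval (Fin.snoc (α := fun _ => MvPolynomial (Fin d) k ⧸ J)
      (fun i => Ideal.Quotient.mk J (X i)) 0)
  have hπc : ∀ i : Fin d, π (X i.castSucc) = Ideal.Quotient.mk J (X i) := by
    intro i; simp [π]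
  have hπl : π (X (Fin.last d)) = 0 := by simp [π]
  have hπI : ∀ a ∈ I, π a = 0 := by
    intro a ha
    have : I ≤ RingHom.ker π := by
      rw [hI, Ideal.span_le]
      rintro _ (⟨i, rfl⟩ | rfl)
      · simp only [SetLike.mem_coe, RingHom.mem_ker, map_pow, pow_one]
        induction i using Fin.lastCases with
        | last => rw [hπl, zero_pow hp0]
        | cast i => rw [hπc, hJpow]
      · simp only [SetLike.mem_coe, RingHom.mem_ker, map_add, map_sum, map_pow, hπc, hπl, hJf]
        simp
    exact this ha
  have hN : FiniteDimensional k (MvPolynomial (Fin d) k ⧸ J) := by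
    have hs : Function.Surjective (Ideal.Quotient.liftₐ I π hπI) := by
      intro y
      obtain ⟨g, rfl⟩ := Ideal.Quotient.mk_surjective y
      refine ⟨Ideal.Quotient.mk I (rename Fin.castSucc g), ?_⟩
      have : π.comp (rename Fin.castSucc) = Ideal.Quotient.mkₐ k J := by
        apply MvPolynomial.algHom_ext
        intro i
        simpa using hπc i
      exact DFunLike.congr_fun this g
    exact Module.Finite.of_surjective (Ideal.Quotient.liftₐ I π hπI).toLinearMap hs
  set t := Ideal.Quotient.mk I (X (Fin.last d)) with ht
  refine (finrank_le_of_nilp (k := k) t p (hIpow _)).trans (Nat.mul_le_mul_left _ ?_)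
  let q : (MvPolynomial (Fin (d+1)) k) →ₐ[k]
      ((MvPolynomial (Fin (d+1)) k ⧸ I) ⧸ Ideal.span {t}) :=
    (Ideal.Quotient.mkₐ k (Ideal.span {t})).comp (Ideal.Quotient.mkₐ k I)
  have hq : Function.Surjective q :=
    (Ideal.Quotient.mkₐ_surjective k _).comp (Ideal.Quotient.mkₐ_surjective k _)
  have hql : q (X (Fin.last d)) = 0 :=
    Ideal.Quotient.eq_zero_iff_mem.2 (Ideal.mem_span_singleton_self t)
  have hqI : ∀ a ∈ I, q a = 0 := by
    intro a ha
    have : Ideal.Quotient.mkₐ k I a = 0 := Ideal.Quotient.eq_zero_iff_mem.2 ha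
    simp only [q, AlgHom.comp_apply, this, map_zero]
  let ρ : MvPolynomial (Fin d) k →ₐ[k] _ := q.comp (rename Fin.castSucc)
  have hρJ : ∀ a ∈ J, ρ a = 0 := by
    intro a ha
    have : J ≤ RingHom.ker ρ := by
      rw [hJ, Ideal.span_le]
      rintro _ (⟨i, rfl⟩ | rfl)
      · simp only [SetLike.mem_coe, RingHom.mem_ker, pow_one, ρ, AlgHom.comp_apply, map_pow,
          rename_X]
        rw [← map_pow]
        exact hqI _ (Ideal.subset_span (Or.inl ⟨i.castSucc, by simp⟩))
      · have h := hqI _ (Ideal.subset_span (Or.inr rfl))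
        have h3 : q (X (Fin.last d) ^ 3) = 0 := by
          rw [pow_succ, map_mul, hql]; exact mul_zero (M₀ := (MvPolynomial (Fin (d+1)) k ⧸ I) ⧸ Ideal.span {t}) _
        have h4 := (map_add q _ _).symm.trans h
        rw [h3] at h4
        replace h := (add_zero _).symm.trans h4
        simpa [ρ] using h
    exact this ha
  have hρs : Function.Surjective (Ideal.Quotient.liftₐ J ρ hρJ) := by
    intro y
    obtain ⟨g, rfl⟩ := hq y
    let σ : MvPolynomial (Fin (d+1)) k →ₐ[k] MvPolynomial (Fin d) k :=
      aeval (Fin.snoc (α := fun _ => MvPolynomial (Fin d) k) (fun i => X i) 0)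
    refine ⟨Ideal.Quotient.mk J (σ g), ?_⟩
    have : ρ.comp σ = q := by
      apply MvPolynomial.algHom_ext
      intro i
      induction i using Fin.lastCases with
      | last => rw [hql]; simp [σ]
      | cast i => simp [σ, ρ]
    exact DFunLike.congr_fun this g
  exact LinearMap.finrank_le_finrank_of_surjective
    (f := (Ideal.Quotient.liftₐ J ρ hρJ).toLinearMap) hρs
end

section
/- Let k be an algebraically closed field of characteristic 2, let n ≥ 0, and let v, w be elements of the formal power series ring k[[x_0,…,x_{n−1}]] (multivariate power series in n variables) with v a unit. Then there exists t ∈ k[[x_0,…,x_{n−1}]] such that t² + v·t + w = 0; moreover, if w is a unit then t can be taken to be a unit. -/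
theorem aux_mem_span {k : Type*} [Field k] {n : ℕ} (S : Finset (Fin n)) :
    ∀ f : MvPowerSeries (Fin n) k,
      (∀ m : Fin n →₀ ℕ, (∀ s ∈ S, m s = 0) → MvPowerSeries.coeff m f = 0) →
      f ∈ (Ideal.span (Set.range MvPowerSeries.X) : Ideal (MvPowerSeries (Fin n) k)) := by
  classical
  induction S using Finset.induction_on with
  | empty =>
    intro f hf
    have : f = 0 := by
      ext m
      simpa using hf m (by simp)
    rw [this]
    exact Ideal.zero_mem _
  | insert a S _ ih =>
    intro f hf
    let g : MvPowerSeries (Fin n) k := fun m => if m a = 0 then 0 else MvPowerSeries.coeff m f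
    have hg : ∀ m, MvPowerSeries.coeff m g = if m a = 0 then 0 else MvPowerSeries.coeff m f :=
      fun m => rfl
    have h1 : (MvPowerSeries.X a : MvPowerSeries (Fin n) k) ∣ g := by
      rw [MvPowerSeries.X_dvd_iff]
      intro m hm
      rw [hg, if_pos hm]
    have h2 : f - g ∈ (Ideal.span (Set.range MvPowerSeries.X) :
        Ideal (MvPowerSeries (Fin n) k)) := by
      apply ih
      intro m hm
      rw [map_sub, hg]
      split_ifs with h
      · rw [sub_zero]
        apply hf
        intro s hs
        rcases Finset.mem_insert.mp hs with rfl | hs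
        · exact h
        · exact hm s hs
      · simp
    have h3 := Ideal.mem_of_dvd _ h1 (Ideal.subset_span (Set.mem_range_self a))
    have h4 := Ideal.add_mem _ h2 h3
    simpa using h4

/-- In characteristic 2, over an algebraically closed field, the quadratic equation
`t² + v·t + w = 0` with `v` a unit has a solution in the multivariate power series ring;
moreover, if `w` is a unit then the solution can be taken to be a unit. -/
theorem quadratic_solvable_char_two (k : Type*) [Field k] [IsAlgClosed k] [CharP k 2]
    (n : ℕ) (v w : MvPowerSeries (Fin n) k) (hv : IsUnit v) :
    (∃ t : MvPowerSeries (Fin n) k, t ^ 2 + v * t + w = 0) ∧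
      (IsUnit w → ∃ t : MvPowerSeries (Fin n) k, IsUnit t ∧ t ^ 2 + v * t + w = 0) := by
  have key : ∃ t : MvPowerSeries (Fin n) k, t ^ 2 + v * t + w = 0 := by
    obtain ⟨c, hc⟩ : ∃ c : k, c ^ 2 + MvPowerSeries.constantCoeff v * c
        + MvPowerSeries.constantCoeff w = 0 := by
      obtain ⟨c, hc⟩ := IsAlgClosed.exists_root
        (Polynomial.C 1 * Polynomial.X ^ 2 + Polynomial.C (MvPowerSeries.constantCoeff v) *
          Polynomial.X + Polynomial.C (MvPowerSeries.constantCoeff w) : Polynomial k)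
        (by rw [Polynomial.degree_quadratic one_ne_zero]; decide)
      exact ⟨c, by simpa [Polynomial.IsRoot] using hc⟩
    have h2 : (2 : MvPowerSeries (Fin n) k) = 0 := by
      have : (MvPowerSeries.C (2 : k) : MvPowerSeries (Fin n) k) = 0 := by
        rw [CharTwo.two_eq_zero, map_zero]
      rwa [map_ofNat] at this
    obtain ⟨t, ht, -⟩ := HenselianRing.is_henselian
      (I := (Ideal.span (Set.range MvPowerSeries.X) : Ideal (MvPowerSeries (Fin n) k)))
      (Polynomial.X ^ 2 + Polynomial.C v * Polynomial.X + Polynomial.C w)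
      (by monicity!)
      (MvPowerSeries.C c)
      (by
        apply aux_mem_span Finset.univ
        intro m hm
        have : m = 0 := by ext s; exact hm s (Finset.mem_univ s)
        subst this
        simpa using hc)
      (by
        apply IsUnit.map
        simpa [one_add_one_eq_two, h2] using hv)
    exact ⟨t, by simpa [Polynomial.IsRoot] using ht⟩
  refine ⟨key, fun hw => ?_⟩
  obtain ⟨t, ht⟩ := key
  refine ⟨t, ?_, ht⟩
  refine isUnit_of_dvd_unit ⟨-(t + v), ?_⟩ hw
  linear_combination ht
end
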